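/- arXiv:1501.00903 — 10 statements merged into one kernel-verified Lean document; each statement's English description precedes it below -/
import Mathlib

section
/- For all integers n ≥ 0 and 0 ≤ k ≤ n, the number T_{n,k} defined by the recurrence satisfies the closed form T_{n,k} = Σ_{s=k}^{n} C(n,s) · c^{n−s} · m^{s−k} · S(s,k), where S(s,k) denotes the Stirling numbers of the second kind; consequently the total number T_n = Σ_{k=0}^{n} T_{n,k} equals Σ_{k=0}^{n} C(n,k) c^{n−k} Σ_{j=0}^{k} m^{k−j} S(k,j). -/
/-- The number of `(c,m)`-colored `B_n`-partitions with `k` non-zero-blocks,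
defined by `T 0 0 = 1`, `T n k = 0` for `k > n`, and
`T n k = T (n-1) (k-1) + (m*k + c) * T (n-1) k` for `n ≥ 1`
(where `T (n-1) (-1) = 0`). -/
def Tnk (m c : ℕ) : ℕ → ℕ → ℕ
  | 0, 0 => 1
  | 0, _ + 1 => 0
  | n + 1, 0 => c * Tnk m c n 0
  | n + 1, k + 1 => Tnk m c n k + (m * (k + 1) + c) * Tnk m c n (k + 1)

/-- The total number `T_n = ∑_{k=0}^n T_{n,k}` of `(c,m)`-colored `B_n`-partitions. -/
def Ttot (m c n : ℕ) : ℕ := ∑ k ∈ Finset.range (n + 1), Tnk m c n k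

/-- The Stirling numbers of the second kind `S(n,k)`. -/
def stirling2 : ℕ → ℕ → ℕ
  | 0, 0 => 1
  | 0, _ + 1 => 0
  | _ + 1, 0 => 0
  | n + 1, k + 1 => stirling2 n k + (k + 1) * stirling2 n (k + 1)

theorem s2_zero_of_lt : ∀ (n k : ℕ), n < k → stirling2 n k = 0
  | _, 0, hk => absurd hk (Nat.not_lt_zero _)
  | 0, _ + 1, _ => by rw [stirling2]
  | n + 1, k + 1, hk => by
    rw [stirling2, s2_zero_of_lt n k (by omega), s2_zero_of_lt n (k+1) (by omega), mul_zero, add_zero]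

theorem g_succ (m s k : ℕ) : m ^ (s + 1 - (k + 1)) * stirling2 (s + 1) (k + 1) =
    m ^ (s - k) * stirling2 s k + m * (k + 1) * (m ^ (s - (k + 1)) * stirling2 s (k + 1)) := by
  rw [stirling2, Nat.add_sub_add_right]
  rcases Nat.lt_or_ge s (k + 1) with h | h
  · rw [s2_zero_of_lt s (k+1) h]; ring
  · obtain ⟨d, rfl⟩ := Nat.exists_eq_add_of_le h
    rw [show k + 1 + d - k = d + 1 by omega, show k + 1 + d - (k + 1) = d by omega]
    ring

theorem binom_step (c n : ℕ) (f : ℕ → ℕ) :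
    ∑ s ∈ Finset.range (n + 1 + 1), (n + 1).choose s * c ^ (n + 1 - s) * f s =
    c * ∑ s ∈ Finset.range (n + 1), n.choose s * c ^ (n - s) * f s +
      ∑ s ∈ Finset.range (n + 1), n.choose s * c ^ (n - s) * f (s + 1) := by
  have h : ∑ s ∈ Finset.range (n + 1), n.choose s * c ^ (n - s) * f s =
      ∑ s ∈ Finset.range (n + 1 + 1), n.choose s * c ^ (n - s) * f s := by
    rw [Finset.sum_range_succ _ (n + 1)]; simp
  rw [h, Finset.sum_range_succ', Finset.sum_range_succ' _ (n + 1), mul_add, Finset.mul_sum,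
    add_right_comm, ← Finset.sum_add_distrib]
  congr 1
  · apply Finset.sum_congr rfl
    intro s hs
    rw [Finset.mem_range] at hs
    rw [Nat.choose_succ_succ, Nat.add_sub_add_right]
    rcases Nat.lt_or_ge s n with h | h
    · obtain ⟨d, rfl⟩ := Nat.exists_eq_add_of_lt h
      rw [show s + d + 1 - s = d + 1 by omega, show s + d + 1 - (s + 1) = d by omega]
      simp only [Nat.succ_eq_add_one]
      ring
    · rw [Nat.choose_eq_zero_of_lt (show n < s.succ by omega)]
      ring
  · simp; ring

theorem Tnk_eq (m c : ℕ) : ∀ n k : ℕ, Tnk m c n k =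
    ∑ s ∈ Finset.range (n + 1), n.choose s * c ^ (n - s) * (m ^ (s - k) * stirling2 s k) := by
  intro n
  induction n with
  | zero => intro k; cases k <;> simp [Tnk, stirling2]
  | succ n ih =>
    intro k
    rw [binom_step c n (fun s => m ^ (s - k) * stirling2 s k)]
    cases k with
    | zero => rw [Tnk, ih]; simp [stirling2]
    | succ k =>
      simp only [g_succ]
      rw [Tnk, ih, ih]
      simp only [mul_add, Finset.sum_add_distrib, add_mul, Finset.mul_sum, Finset.sum_mul]
      simp only [← Finset.sum_add_distrib]
      apply Finset.sum_congr rfl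
      intro s _
      ring

theorem stmt_0 (m c : ℕ) (hm : 0 < m) (hc : 0 < c) :
    (∀ n k : ℕ, k ≤ n →
      Tnk m c n k =
        ∑ s ∈ Finset.Icc k n, n.choose s * c ^ (n - s) * m ^ (s - k) * stirling2 s k) ∧
    (∀ n : ℕ,
      Ttot m c n =
        ∑ k ∈ Finset.range (n + 1), n.choose k * c ^ (n - k) *
          ∑ j ∈ Finset.range (k + 1), m ^ (k - j) * stirling2 k j) := by
  constructor
  · intro n k hk
    rw [Tnk_eq]
    symm
    rw [Finset.sum_subset (s₂ := Finset.range (n + 1))]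
    · apply Finset.sum_congr rfl
      intro s _
      ring
    · intro s hs
      simp only [Finset.mem_Icc, Finset.mem_range] at *
      omega
    · intro s hs hs'
      simp only [Finset.mem_Icc, Finset.mem_range] at *
      rw [s2_zero_of_lt s k (by omega), mul_zero]
  · intro n
    simp only [Ttot, Tnk_eq]
    rw [Finset.sum_comm]
    apply Finset.sum_congr rfl
    intro s hs
    rw [← Finset.mul_sum]
    congr 1
    symm
    apply Finset.sum_subset
    · intro j hj
      simp only [Finset.mem_range] at *
      omega
    · intro j _ hj
      simp only [Finset.mem_range] at *
      rw [s2_zero_of_lt s j (by omega), mul_zero]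
end

section
/- The exponential generating function of the total numbers T_n satisfies the identity Σ_{n≥0} T_n · z^n/n! = exp((e^{mz} − 1)/m + cz), as an identity of formal power series in z over ℚ (equivalently, as an identity of analytic functions of z). -/
theorem Tnk_zero_of_lt (m c : ℕ) : ∀ n k, n < k → Tnk m c n k = 0
  | 0, 0, h => by omega
  | 0, k + 1, _ => by simp [Tnk]
  | n + 1, 0, h => by omega
  | n + 1, k + 1, h => by
    simp [Tnk, Tnk_zero_of_lt m c n k (by omega), Tnk_zero_of_lt m c n (k + 1) (by omega)]

theorem Tnk_sum_succ (m c n : ℕ) (w : ℂ) :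
    ∑ k ∈ Finset.range (n + 2), (Tnk m c (n + 1) k : ℂ) * w ^ k =
      ∑ k ∈ Finset.range (n + 1), (Tnk m c n k : ℂ) * ((m * k + c + w) * w ^ k) := by
  have h1 : ∑ k ∈ Finset.range (n + 1), (Tnk m c n k : ℂ) * ((m * k + c) * w ^ k) =
      ∑ k ∈ Finset.range (n + 2), (Tnk m c n k : ℂ) * ((m * k + c) * w ^ k) := by
    rw [Finset.sum_range_succ _ (n + 1), Tnk_zero_of_lt m c n (n + 1) (by omega)]
    simp
  have h2 : ∑ k ∈ Finset.range (n + 1), (Tnk m c n k : ℂ) * ((m * k + c + w) * w ^ k) =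
      ∑ k ∈ Finset.range (n + 1), (Tnk m c n k : ℂ) * ((m * k + c) * w ^ k) +
      ∑ k ∈ Finset.range (n + 1), (Tnk m c n k : ℂ) * w ^ (k + 1) := by
    rw [← Finset.sum_add_distrib]
    exact Finset.sum_congr rfl fun k _ => by ring
  rw [h2, h1, Finset.sum_range_succ' _ (n + 1), Finset.sum_range_succ' _ (n + 1),
    add_right_comm, ← Finset.sum_add_distrib]
  congr 1
  · refine Finset.sum_congr rfl fun k _ => ?_
    simp only [Tnk]
    push_cast
    ring
  · simp [Tnk]
    ring

theorem egf_hasDerivAt (m c : ℕ) (hm : 0 < m) (z : ℂ) :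
    HasDerivAt (fun z : ℂ => Complex.exp ((Complex.exp (m * z) - 1) / m + c * z))
      ((Complex.exp (m * z) + c) * Complex.exp ((Complex.exp (m * z) - 1) / m + c * z)) z := by
  have hm' : (m : ℂ) ≠ 0 := by exact_mod_cast hm.ne'
  have h0 : HasDerivAt (fun z : ℂ => (m : ℂ) * z) m z := by
    simpa using (hasDerivAt_id z).const_mul (m : ℂ)
  have h0c : HasDerivAt (fun z : ℂ => (c : ℂ) * z) c z := by
    simpa using (hasDerivAt_id z).const_mul (c : ℂ)
  have h := (((h0.cexp.sub_const 1).div_const (m : ℂ)).fun_add h0c).cexp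
  rw [mul_div_cancel_right₀ _ hm', mul_comm] at h
  exact h

theorem egf_iteratedDeriv (m c : ℕ) (hm : 0 < m) (n : ℕ) :
    iteratedDeriv n (fun z : ℂ => Complex.exp ((Complex.exp (m * z) - 1) / m + c * z)) =
      fun z : ℂ => (∑ k ∈ Finset.range (n + 1), (Tnk m c n k : ℂ) * Complex.exp (m * z) ^ k) *
        Complex.exp ((Complex.exp (m * z) - 1) / m + c * z) := by
  induction n with
  | zero => simp [Tnk]
  | succ n ih =>
    rw [iteratedDeriv_succ, ih]
    funext z
    have h0 : HasDerivAt (fun z : ℂ => (m : ℂ) * z) m z := by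
      simpa using (hasDerivAt_id z).const_mul (m : ℂ)
    have hs : HasDerivAt
        (fun z : ℂ => ∑ k ∈ Finset.range (n + 1), (Tnk m c n k : ℂ) * Complex.exp (m * z) ^ k)
        (∑ k ∈ Finset.range (n + 1), (Tnk m c n k : ℂ) * (m * k * Complex.exp (m * z) ^ k)) z := by
      refine HasDerivAt.fun_sum fun k _ => HasDerivAt.const_mul _ ?_
      convert h0.cexp.fun_pow k using 1
      rcases k with _ | k
      · simp
      · simp only [Nat.add_sub_cancel]
        ring
    rw [(hs.fun_mul (egf_hasDerivAt m c hm z)).deriv, Tnk_sum_succ, ← mul_assoc, ← add_mul,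
      Finset.sum_mul, ← Finset.sum_add_distrib]
    congr 1
    exact Finset.sum_congr rfl fun k _ => by ring

/-- The exponential generating function identity
`∑_{n≥0} T_n z^n/n! = exp((e^{mz} − 1)/m + cz)`,
stated as an identity of analytic functions of a real variable `z`. -/
theorem stmt_1 (m c : ℕ) (hm : 0 < m) (hc : 0 < c) (z : ℝ) :
    ∑' n : ℕ, (Ttot m c n : ℝ) * z ^ n / n.factorial =
      Real.exp ((Real.exp (m * z) - 1) / m + c * z) := by
  have hd : Differentiable ℂ
      (fun z : ℂ => Complex.exp ((Complex.exp (m * z) - 1) / m + c * z)) :=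
    fun z => (egf_hasDerivAt m c hm z).differentiableAt
  have h := Complex.taylorSeries_eq_of_entire' (c := 0) (z := (z : ℂ)) hd
  simp only [egf_iteratedDeriv m c hm] at h
  apply Complex.ofReal_injective
  push_cast
  rw [← h]
  refine tsum_congr fun n => ?_
  simp [Ttot]
  ring
end

section
/- Let r = r(n) be the unique positive real solution of r·(e^{m·r} + c) = n. Then e^{m·r} = (m·n/log n)·(1 + O(log log n / log n)) as n → ∞; that is, (e^{m·r}·log n/(m·n) − 1) is O(log log n / log n). -/
open Filter

theorem aux_bound (m c n x L l : ℝ) (hm : 1 ≤ m) (hc : 1 ≤ c) (hn : 0 < n) (hx : 0 < x)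
    (hL : L = Real.log n) (hl : l = Real.log L) (h : x * (Real.exp x + c) = m * n)
    (h1 : 3 ≤ l) (h2 : m ≤ L) (h3 : 4 * l ≤ L) (h4 : 4 * c * L ≤ n) :
    |Real.exp x * L / (m * n) - 1| ≤ (2 * (m + 2) + 2 * c) * (l / L) := by
  have hL0 : 0 < L := by linarith
  have hE : 0 < Real.exp x := Real.exp_pos x
  have hlogm : Real.log m ≤ m := by
    have := Real.log_le_sub_one_of_pos (show 0 < m by linarith)
    linarith
  have hlogm0 : 0 ≤ Real.log m := Real.log_nonneg hm
  have hup : x ≤ L + Real.log m := by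
    by_cases hx1 : x < 1
    · linarith
    · push Not at hx1
      have : Real.exp x ≤ m * n := by nlinarith
      have h5 := (Real.le_log_iff_exp_le (by positivity)).2 this
      rw [Real.log_mul (by positivity) (by positivity)] at h5
      linarith
  have hlow : L - 3 - l ≤ x := by
    have h5 : n / (4 * L) ≤ Real.exp x := by
      rw [div_le_iff₀ (by positivity)]
      have : x * (Real.exp x + c) ≤ 2 * L * (Real.exp x + c) :=
        mul_le_mul_of_nonneg_right (by linarith) (by positivity)
      nlinarith
    have h6 := Real.log_le_log (by positivity) h5
    rw [Real.log_exp, Real.log_div (by positivity) (by positivity),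
      Real.log_mul (by norm_num) (by positivity)] at h6
    have := Real.log_le_sub_one_of_pos (show (0:ℝ) < 4 by norm_num)
    linarith
  have hx2 : L / 2 ≤ x := by linarith
  have hEx : L / 2 ≤ Real.exp x + c := by
    have := Real.add_one_le_exp x
    linarith
  have key : Real.exp x * L / (m * n) - 1 =
      Real.exp x / (Real.exp x + c) * ((L - x) / x) - c / (Real.exp x + c) := by
    rw [← h]
    have : Real.exp x + c ≠ 0 := by positivity
    field_simp
    ring
  have b1 : |Real.exp x / (Real.exp x + c)| ≤ 1 := by
    rw [abs_of_pos (by positivity), div_le_one (by positivity)]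
    linarith
  have b2 : |(L - x) / x| ≤ 2 * (m + 2) * (l / L) := by
    rw [abs_div, abs_of_pos hx, div_le_iff₀ hx]
    have e1 : |L - x| ≤ (m + 2) * l := by
      rw [abs_le]; constructor <;> nlinarith
    have e2 : (m + 2) * l = 2 * (m + 2) * (l / L) * (L / 2) := by field_simp
    have e3 : 2 * (m + 2) * (l / L) * (L / 2) ≤ 2 * (m + 2) * (l / L) * x :=
      mul_le_mul_of_nonneg_left hx2 (by positivity)
    linarith
  have b3 : |c / (Real.exp x + c)| ≤ 2 * c * (l / L) := by
    rw [abs_of_pos (by positivity), div_le_iff₀ (by positivity)]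
    have e2 : c * l = 2 * c * (l / L) * (L / 2) := by field_simp
    have e3 : 2 * c * (l / L) * (L / 2) ≤ 2 * c * (l / L) * (Real.exp x + c) :=
      mul_le_mul_of_nonneg_left hEx (by positivity)
    nlinarith
  rw [key]
  calc _ ≤ |Real.exp x / (Real.exp x + c) * ((L - x) / x)| + |c / (Real.exp x + c)| := abs_sub _ _
    _ ≤ 1 * (2 * (m + 2) * (l / L)) + 2 * c * (l / L) := by
        rw [abs_mul]
        gcongr
    _ = _ := by ring

/-- If `r n` is the unique positive solution of `r·(e^{m·r} + c) = n`, then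
`e^{m·r} = (m·n/log n)·(1 + O(log log n / log n))` as `n → ∞`. -/
theorem stmt_8 (m c : ℕ) (hm : 0 < m) (hc : 0 < c) (r : ℕ → ℝ)
    (hr : ∀ n : ℕ, 2 ≤ n → 0 < r n ∧ r n * (Real.exp (m * r n) + c) = n) :
    (fun n : ℕ => Real.exp (m * r n) * Real.log n / (m * n) - 1) =O[atTop]
      (fun n : ℕ => Real.log (Real.log n) / Real.log n) := by
  have tn : Tendsto (fun n : ℕ => (n : ℝ)) atTop atTop := tendsto_natCast_atTop_atTop
  have tL := Real.tendsto_log_atTop.comp tn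
  have tl := Real.tendsto_log_atTop.comp tL
  have lo := Real.isLittleO_log_id_atTop
  have a3 := tL.eventually (lo.def (show (0:ℝ) < 1 / 4 by norm_num))
  have hc' : (1:ℝ) ≤ c := by exact_mod_cast hc
  have hm' : (1:ℝ) ≤ m := by exact_mod_cast hm
  have a4 := tn.eventually (lo.def (show (0:ℝ) < 1 / (4 * c) by positivity))
  refine Asymptotics.IsBigO.of_bound (2 * ((m:ℝ) + 2) + 2 * c) ?_
  filter_upwards [a3, a4, tL.eventually_ge_atTop (m : ℝ), tl.eventually_ge_atTop 3,
    eventually_ge_atTop 2] with n h3 h4 h2 h1 hn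
  obtain ⟨hr0, hre⟩ := hr n hn
  simp only [Function.comp, id, Real.norm_eq_abs] at *
  have hn0 : (0:ℝ) < n := by positivity
  have hL0 : 0 < Real.log n := by linarith
  rw [abs_of_pos (by linarith), abs_of_pos hL0] at h3
  rw [abs_of_pos hL0, abs_of_pos hn0, div_mul_eq_mul_div, le_div_iff₀ (by positivity)] at h4
  rw [abs_of_pos (div_pos (by linarith) hL0)]
  refine aux_bound m c n (m * r n) _ _ hm' hc' hn0 (by positivity) rfl rfl ?_ h1 h2
    (by linarith) (by linarith)
  rw [mul_assoc, hre]
end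

section
/- Let r = r(n) be the unique positive real solution of r·(e^{m·r} + c) = n. Then (n/r)^n = e^{m·r·n + c·r}·(1 + O(log² n / n)) as n → ∞; that is, ((n/r)^n · e^{−m·r·n − c·r} − 1) is O(log² n / n). -/
open Filter

/-- If `r n` is the unique positive solution of `r·(e^{m·r} + c) = n`, then
`(n/r)^n = e^{m·r·n + c·r}·(1 + O(log² n / n))` as `n → ∞`. -/
theorem stmt_9 (m c : ℕ) (hm : 0 < m) (hc : 0 < c) (r : ℕ → ℝ)
    (hr : ∀ n : ℕ, 2 ≤ n → 0 < r n ∧ r n * (Real.exp (m * r n) + c) = n) :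
    (fun n : ℕ => ((n : ℝ) / r n) ^ n * Real.exp (-(m * r n * n + c * r n)) - 1)
      =O[atTop] (fun n : ℕ => (Real.log n) ^ 2 / n) := by
  have hc' : (0 : ℝ) < c := by exact_mod_cast hc
  have hm' : (1 : ℝ) ≤ m := by exact_mod_cast hm
  have cast := tendsto_natCast_atTop_atTop (R := ℝ)
  have e1 : ∀ᶠ n : ℕ in atTop, ‖Real.log n‖ ≤ 1 / (2 * c) * ‖(n : ℝ)‖ :=
    cast.eventually (Real.isLittleO_log_id_atTop.bound (by positivity))
  have e2 : ∀ᶠ n : ℕ in atTop, ‖Real.log n ^ 2‖ ≤ 1 / (2 * c ^ 2) * ‖(n : ℝ)‖ :=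
    cast.eventually
      ((Real.isLittleO_pow_log_id_atTop (n := 2)).bound (by positivity))
  refine Asymptotics.IsBigO.of_bound (4 * c ^ 2) ?_
  filter_upwards [e1, e2, eventually_ge_atTop 3] with n h1 h2 h3
  obtain ⟨hr0, hrn⟩ := hr n (by omega)
  have hn3 : (3 : ℝ) ≤ n := by exact_mod_cast h3
  have hn0 : (0 : ℝ) < n := by linarith
  have hlog1 : 1 ≤ Real.log n := by
    rw [Real.le_log_iff_exp_le hn0]
    linarith [Real.exp_one_lt_d9]
  generalize hρ : r n = ρ at *
  set E := Real.exp (m * ρ) with hE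
  have hE0 : 0 < E := Real.exp_pos _
  have hρlog : ρ ≤ Real.log n := by
    by_cases h : ρ ≤ 1
    · linarith
    push Not at h
    rw [Real.le_log_iff_exp_le hn0]
    have : Real.exp ρ ≤ E := Real.exp_le_exp.mpr (by nlinarith)
    nlinarith [mul_pos hr0 hc']
  rw [Real.norm_of_nonneg (by positivity), Real.norm_of_nonneg hn0.le] at h1 h2
  have h1' : c * Real.log n ≤ n / 2 := by
    calc c * Real.log n ≤ c * (1 / (2 * c) * n) := by gcongr
      _ = n / 2 := by field_simp
  have hnE : n / 2 ≤ ρ * E := by nlinarith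
  set X := n * Real.log (1 + c / E) - c * ρ with hX
  have hx0 : 0 < c / E := by positivity
  have hXnn : 0 ≤ X := by
    have := Real.one_sub_inv_le_log_of_pos (show 0 < 1 + c / E by positivity)
    have h : n * (1 - (1 + c / E)⁻¹) = c * ρ := by
      rw [← hrn]; field_simp; ring
    have := mul_le_mul_of_nonneg_left this hn0.le
    linarith
  have hXle : X ≤ 2 * c ^ 2 * (Real.log n ^ 2 / n) := by
    have := Real.log_le_sub_one_of_pos (show 0 < 1 + c / E by positivity)
    have h : n * (1 + c / E - 1) = c * ρ + ρ ^ 2 * c ^ 2 / (ρ * E) := by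
      rw [← hrn]; field_simp; ring
    have := mul_le_mul_of_nonneg_left this hn0.le
    calc X ≤ ρ ^ 2 * c ^ 2 / (ρ * E) := by linarith
      _ ≤ Real.log n ^ 2 * c ^ 2 / (n / 2) := by gcongr
      _ = _ := by field_simp
  have hX1 : X ≤ 1 := by
    refine hXle.trans ?_
    calc 2 * c ^ 2 * (Real.log n ^ 2 / n)
        ≤ 2 * c ^ 2 * ((1 / (2 * c ^ 2) * n) / n) := by gcongr
      _ = 1 := by field_simp
  have key : ((n : ℝ) / ρ) ^ n * Real.exp (-(m * ρ * n + c * ρ)) = Real.exp X := by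
    have a : (n : ℝ) / ρ = Real.exp (m * ρ + Real.log (1 + c / E)) := by
      rw [Real.exp_add, Real.exp_log (by positivity), ← hE, ← hrn]
      field_simp
    rw [a, ← Real.exp_nat_mul, ← Real.exp_add]
    congr 1
    rw [hX]; ring
  rw [key, Real.norm_eq_abs, Real.norm_of_nonneg (by positivity)]
  have := Real.abs_exp_sub_one_le (x := X) (by rw [abs_of_nonneg hXnn]; exact hX1)
  rw [abs_of_nonneg hXnn] at this
  linarith
end

section
/- Let r = r(n) be the unique positive real solution of r·(e^{m·r} + c) = n. Then as n → ∞, T_n = (1/√(m·r + 1))·exp(m·n·r − n + n/(m·r) + 2·c·r − (1+c)/m)·(1 + O(n^{−1/2}·log^{7/2} n)); that is, the ratio of T_n to the stated main term equals 1 + O(n^{−1/2}·log^{7/2} n). -/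
open Filter

open MeasureTheory

noncomputable def egf (m c : ℕ) (z : ℂ) : ℂ :=
  Complex.exp (c * z + (Complex.exp (m * z) - 1) / m)

lemma Tnk_eq_zero (m c : ℕ) : ∀ n k : ℕ, n < k → Tnk m c n k = 0
  | 0, 0, h => by omega
  | 0, k + 1, _ => by simp [Tnk]
  | n + 1, 0, h => by omega
  | n + 1, k + 1, h => by
    rw [Tnk, Tnk_eq_zero m c n k (by omega), Tnk_eq_zero m c n (k+1) (by omega)]; simp

lemma egf_step (m c : ℕ) (hm : 0 < m) (k : ℕ) (z : ℂ) :
    HasDerivAt (fun z => Complex.exp (m * k * z) * egf m c z)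
      ((m * k + c) * (Complex.exp (m * k * z) * egf m c z)
        + Complex.exp (m * (k + 1 : ℕ) * z) * egf m c z) z := by
  have hm' : (m : ℂ) ≠ 0 := by exact_mod_cast hm.ne'
  have h1 : HasDerivAt (fun z : ℂ => Complex.exp (m * k * z)) (Complex.exp (m * k * z) * (m * k * 1)) z :=
    ((hasDerivAt_id z).const_mul (m * k : ℂ)).cexp
  have h2 : HasDerivAt (fun z : ℂ => Complex.exp (m * z)) (Complex.exp (m * z) * (m * 1)) z :=
    ((hasDerivAt_id z).const_mul (m : ℂ)).cexp
  have h3 : HasDerivAt (egf m c) (egf m c z * (c * 1 + (Complex.exp (m * z) * (m * 1)) / m)) z :=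
    (((hasDerivAt_id z).const_mul (c : ℂ)).add ((h2.sub_const 1).div_const (m : ℂ))).cexp
  refine (h1.mul h3).congr_deriv ?_
  have : Complex.exp (m * (k + 1 : ℕ) * z) = Complex.exp (m * k * z) * Complex.exp (m * z) := by
    rw [← Complex.exp_add]; congr 1; push_cast; ring
  rw [this]
  field_simp
  ring

lemma egf_iter (m c : ℕ) (hm : 0 < m) (n : ℕ) :
    iteratedDeriv n (egf m c) = fun z => ∑ k ∈ Finset.range (n + 1),
      (Tnk m c n k : ℂ) * (Complex.exp (m * k * z) * egf m c z) := by
  induction n with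
  | zero => ext z; simp [Tnk]
  | succ n ih =>
    rw [iteratedDeriv_succ, ih]
    ext z
    have := HasDerivAt.fun_sum (u := Finset.range (n + 1)) (fun k _ =>
      (egf_step m c hm k z).const_mul (Tnk m c n k : ℂ))
    rw [this.deriv]
    have e : ∀ f : ℕ → ℂ, f (n+1) = 0 → ∑ k ∈ Finset.range (n+1), f k =
        (∑ k ∈ Finset.range (n+1), f (k+1)) + f 0 := by
      intro f hf
      rw [← Finset.sum_range_succ' f (n+1), Finset.sum_range_succ f (n+1), hf, add_zero]
    have e1 := e (fun k => (Tnk m c n k : ℂ) * ((m * k + c) * (Complex.exp (m * k * z) * egf m c z)))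
      (by simp [Tnk_eq_zero])
    calc _ = ∑ k ∈ Finset.range (n+1), (Tnk m c n k : ℂ) * ((m * k + c) * (Complex.exp (m * k * z) * egf m c z))
          + ∑ k ∈ Finset.range (n+1), (Tnk m c n k : ℂ) * (Complex.exp (m * (k + 1 : ℕ) * z) * egf m c z) := by
            rw [← Finset.sum_add_distrib]
            exact Finset.sum_congr rfl fun k _ => by ring
      _ = _ := by
        rw [e1, Finset.sum_range_succ' _ (n + 1), add_right_comm, ← Finset.sum_add_distrib]
        congr 1
        · refine Finset.sum_congr rfl fun k _ => ?_
          rw [Tnk]; push_cast; ring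
        · rw [Tnk]; push_cast; ring

lemma egf_iter_zero (m c : ℕ) (hm : 0 < m) (n : ℕ) :
    iteratedDeriv n (egf m c) 0 = (Ttot m c n : ℂ) := by
  rw [egf_iter m c hm]
  simp [egf, Ttot]

lemma Ttot_cauchy (m c : ℕ) (hm : 0 < m) (n : ℕ) (r : ℝ) (hr : 0 < r) :
    (Ttot m c n : ℂ) = (n.factorial : ℂ) / (2 * Real.pi) *
      ∫ θ in (-Real.pi)..Real.pi,
        egf m c (r * Complex.exp (θ * Complex.I)) / (r * Complex.exp (θ * Complex.I)) ^ n := by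
  have hd : Differentiable ℂ (egf m c) := by
    unfold egf; fun_prop
  have h := hd.differentiableOn.circleIntegral_one_div_sub_center_pow_smul (R := r) (c := 0) hr n
  rw [egf_iter_zero m c hm] at h
  have hp : Function.Periodic (fun θ : ℝ => egf m c (r * Complex.exp (θ * Complex.I)) /
      (r * Complex.exp (θ * Complex.I)) ^ n) (2 * Real.pi) := by
    intro θ
    have : Complex.exp (((θ + 2 * Real.pi : ℝ) : ℂ) * Complex.I) = Complex.exp (θ * Complex.I) := by
      push_cast
      rw [add_mul, Complex.exp_add, Complex.exp_two_pi_mul_I, mul_one]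
    simp only [this]
  have h2 := hp.intervalIntegral_add_eq (-Real.pi) 0
  have e1 : -Real.pi + 2 * Real.pi = Real.pi := by ring
  have e2 : 0 + 2 * Real.pi = 2 * Real.pi := by ring
  rw [e1, e2] at h2
  rw [h2]
  have h3 : (∮ z in C(0, r), (1 / (z - 0) ^ (n + 1)) • egf m c z) = Complex.I *
     ∫ θ in (0)..(2 * Real.pi), egf m c (r * Complex.exp (θ * Complex.I)) /
      (r * Complex.exp (θ * Complex.I)) ^ n := by
    rw [circleIntegral, ← intervalIntegral.integral_const_mul]
    congr 1
    ext θ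
    simp only [deriv_circleMap, circleMap, sub_zero, zero_add, smul_eq_mul]
    have : (r : ℂ) ≠ 0 := by exact_mod_cast hr.ne'
    have := Complex.exp_ne_zero (θ * Complex.I)
    field_simp
    ring
  rw [h3] at h
  have hf : (n.factorial : ℂ) ≠ 0 := by exact_mod_cast n.factorial_ne_zero
  have hpi : (Real.pi : ℂ) ≠ 0 := by exact_mod_cast Real.pi_ne_zero
  simp only [smul_eq_mul] at h
  have h' : (∫ θ in (0)..(2 * Real.pi), egf m c (r * Complex.exp (θ * Complex.I)) /
      (r * Complex.exp (θ * Complex.I)) ^ n) = 2 * Real.pi / n.factorial * (Ttot m c n : ℂ) := by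
    apply mul_left_cancel₀ Complex.I_ne_zero
    rw [h]; ring
  rw [h']
  field_simp

/-- the exponent -/
noncomputable def gex (m c : ℕ) (n : ℕ) (r θ : ℝ) : ℂ :=
  c * (r * Complex.exp (θ * Complex.I)) + Complex.exp (m * (r * Complex.exp (θ * Complex.I))) / m
    - (c * r + Complex.exp (m * r) / m) - n * θ * Complex.I

lemma Ttot_gex (m c : ℕ) (hm : 0 < m) (n : ℕ) (r : ℝ) (hr : 0 < r) :
    ((2 * Real.pi * Ttot m c n * r ^ n /
      (n.factorial * Real.exp (c * r + (Real.exp (m * r) - 1) / m)) : ℝ) : ℂ) =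
      ∫ θ in (-Real.pi)..Real.pi, Complex.exp (gex m c n r θ) := by
  have hf : (n.factorial : ℂ) ≠ 0 := by exact_mod_cast n.factorial_ne_zero
  have hpi : (Real.pi : ℂ) ≠ 0 := by exact_mod_cast Real.pi_ne_zero
  have hr' : (r : ℂ) ≠ 0 := by exact_mod_cast hr.ne'
  push_cast
  rw [Ttot_cauchy m c hm n r hr]
  have : ∀ θ : ℝ, egf m c (r * Complex.exp (θ * Complex.I)) / (r * Complex.exp (θ * Complex.I)) ^ n
     = Complex.exp (c * r + (Complex.exp (m * r) - 1) / m) / r ^ n * Complex.exp (gex m c n r θ) := by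
    intro θ
    rw [mul_pow, ← Complex.exp_nat_mul, egf, gex]
    have : (Complex.exp (c * r + (Complex.exp (m * r) - 1) / m) / r ^ n * Complex.exp (c * (r * Complex.exp (θ * Complex.I)) + Complex.exp (m * (r * Complex.exp (θ * Complex.I))) / m
    - (c * r + Complex.exp (m * r) / m) - n * θ * Complex.I)) = 
     (Complex.exp (c * r + (Complex.exp (m * r) - 1) / m) * Complex.exp (c * (r * Complex.exp (θ * Complex.I)) + Complex.exp (m * (r * Complex.exp (θ * Complex.I))) / m
    - (c * r + Complex.exp (m * r) / m) - n * θ * Complex.I)) / r ^ n := by ring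
    rw [this, ← Complex.exp_add, mul_comm ((r:ℂ)^n), ← div_div, ← Complex.exp_sub]
    congr 2
    ring
  simp only [this]
  rw [intervalIntegral.integral_const_mul]
  have := Complex.exp_ne_zero (c * r + (Complex.exp (m * r) - 1) / m)
  field_simp

lemma taylor_step (f f' : ℝ → ℂ) (hf : ∀ t, HasDerivAt f (f' t) t) (h0 : f 0 = 0) (L : ℝ) (hL : 0 ≤ L)
    (k : ℕ) (hb : ∀ t, ‖f' t‖ ≤ L * |t| ^ k) (t : ℝ) : ‖f t‖ ≤ L * |t| ^ (k + 1) := by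
  have := Convex.norm_image_sub_le_of_norm_hasDerivWithin_le (f := f) (f' := f')
    (s := Set.Icc (-|t|) |t|) (x := 0) (y := t) (C := L * |t| ^ k)
    (fun x _ => (hf x).hasDerivWithinAt) ?_ (convex_Icc _ _) (by simp) 
    ⟨neg_abs_le t, le_abs_self t⟩
  · rw [h0] at this
    simp only [sub_zero, Real.norm_eq_abs] at this
    rw [pow_succ, ← mul_assoc]; exact this
  · intro x hx
    refine (hb x).trans ?_
    have : |x| ≤ |t| := abs_le.mpr hx
    gcongr

lemma hasDerivAt_w (θ : ℝ) : HasDerivAt (fun θ : ℝ => Complex.exp (θ * Complex.I))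
    (Complex.exp (θ * Complex.I) * Complex.I) θ := by
  have h : HasDerivAt (fun θ : ℝ => (θ : ℂ) * Complex.I) (1 * Complex.I) θ :=
    (HasDerivAt.ofReal_comp (hasDerivAt_id θ)).mul_const _
  simpa using h.cexp

lemma hasDerivAt_E (m : ℕ) (r θ : ℝ) :
    HasDerivAt (fun θ : ℝ => Complex.exp (m * (r * Complex.exp (θ * Complex.I))))
    (Complex.exp (m * (r * Complex.exp (θ * Complex.I))) *
      (m * (r * (Complex.exp (θ * Complex.I) * Complex.I)))) θ :=
  (((hasDerivAt_w θ).const_mul (r : ℂ)).const_mul (m : ℂ)).cexp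

lemma norm_w (θ : ℝ) : ‖Complex.exp (θ * Complex.I)‖ = 1 := Complex.norm_exp_ofReal_mul_I θ

lemma norm_E (m : ℕ) (r θ : ℝ) :
    ‖Complex.exp (m * (r * Complex.exp (θ * Complex.I)))‖ = Real.exp (m * r * Real.cos θ) := by
  rw [Complex.norm_exp]
  congr 1
  simp [Complex.exp_ofReal_mul_I_re, mul_assoc]

lemma norm_E_le (m : ℕ) (r θ : ℝ) (hr : 0 < r) :
    ‖Complex.exp (m * (r * Complex.exp (θ * Complex.I)))‖ ≤ Real.exp (m * r) := by
  rw [norm_E]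
  apply Real.exp_le_exp.mpr
  have := Real.cos_le_one θ
  have h : 0 ≤ m * r := by positivity
  nlinarith

lemma gex_taylor (m c : ℕ) (hm : 0 < m) (n : ℕ) (r : ℝ) (hr : 1 ≤ r)
    (hn : r * (Real.exp (m * r) + c) = n) (θ : ℝ) :
    ‖gex m c n r θ - ((-(n + m * r ^ 2 * Real.exp (m * r)) / 2 * θ ^ 2 : ℝ) : ℂ)‖ ≤
      (1 + 3 * m + m ^ 2) * r ^ 2 * n * |θ| ^ 3 := by
  have hm' : (m : ℂ) ≠ 0 := by exact_mod_cast hm.ne'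
  have hr0 : 0 < r := by linarith
  set L : ℝ := (1 + 3 * m + m ^ 2) * r ^ 2 * n with hLdef
  have hL : 0 ≤ L := by positivity
  have hnC : (r : ℂ) * (Complex.exp (m * r) + c) = n := by exact_mod_cast congrArg (fun x : ℝ => (x : ℂ)) hn
  set w : ℝ → ℂ := fun θ => Complex.exp (θ * Complex.I) with hw
  set E : ℝ → ℂ := fun θ => Complex.exp (m * (r * Complex.exp (θ * Complex.I))) with hE
  set B : ℂ := n + m * r ^ 2 * Complex.exp (m * r) with hB
  have dw : ∀ t, HasDerivAt w (w t * Complex.I) t := hasDerivAt_w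
  have dE : ∀ t, HasDerivAt E (E t * (m * (r * (w t * Complex.I)))) t := hasDerivAt_E m r
  have dt : ∀ t : ℝ, HasDerivAt (fun t : ℝ => (t : ℂ)) 1 t := fun t =>
    HasDerivAt.ofReal_comp (hasDerivAt_id t)
  have w0 : w 0 = 1 := by simp [hw]
  have E0 : E 0 = Complex.exp (m * r) := by simp [hE]
  let k0 : ℝ → ℂ := fun t => c * (r * w t) + E t / m - (c * r + Complex.exp (m * r) / m) - n * t * Complex.I + B / 2 * t ^ 2
  let k1 : ℝ → ℂ := fun t => Complex.I * (c * r * w t + r * (w t * E t)) - n * Complex.I + B * t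
  let k2 : ℝ → ℂ := fun t => -(c * r * w t + r * (w t * E t) + m * r ^ 2 * (w t ^ 2 * E t)) + B
  let k3 : ℝ → ℂ := fun t => -Complex.I * (c * r * w t + r * (w t * E t) + 3 * m * r ^ 2 * (w t ^ 2 * E t)
    + m ^ 2 * r ^ 3 * (w t ^ 3 * E t))
  have d0 : ∀ t, HasDerivAt k0 (k1 t) t := by
    intro t
    refine (((((((dw t).const_mul (r : ℂ)).const_mul (c : ℂ)).add ((dE t).div_const (m : ℂ))).sub_const _).sub
      (((dt t).const_mul (n : ℂ)).mul_const Complex.I)).add (((dt t).pow 2).const_mul (B / 2))).congr_deriv ?_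
    simp only [k1]
    field_simp
    ring
  have d1 : ∀ t, HasDerivAt k1 (k2 t) t := by
    intro t
    refine ((((((dw t).const_mul (c * r : ℂ)).add (((dw t).mul (dE t)).const_mul (r : ℂ))).const_mul
      Complex.I).sub_const _).add ((dt t).const_mul B)).congr_deriv ?_
    simp only [k2]
    ring_nf
    rw [Complex.I_sq]
    ring
  have d2 : ∀ t, HasDerivAt k2 (k3 t) t := by
    intro t
    refine (((((dw t).const_mul (c * r : ℂ)).add (((dw t).mul (dE t)).const_mul (r : ℂ))).add
      ((((dw t).pow 2).mul (dE t)).const_mul (m * r ^ 2 : ℂ))).neg.add_const _).congr_deriv ?_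
    simp only [k3, Pi.pow_apply]
    push_cast
    ring
  have z0 : k0 0 = 0 := by simp only [k0, w0, E0]; push_cast; ring
  have z1 : k1 0 = 0 := by simp only [k1, w0, E0, ← hnC]; push_cast; ring
  have z2 : k2 0 = 0 := by simp only [k2, w0, E0, hB, ← hnC]; ring
  have b3 : ∀ t, ‖k3 t‖ ≤ L * |t| ^ 0 := by
    intro t
    have nw : ‖w t‖ = 1 := norm_w t
    have nE : ‖E t‖ ≤ Real.exp (m * r) := norm_E_le m r t hr0
    have hX := Real.exp_pos (m * r)
    set X := Real.exp (m * r) with hXdef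
    have : ‖k3 t‖ ≤ c * r + r * X + 3 * m * r ^ 2 * X + m ^ 2 * r ^ 3 * X := by
      simp only [k3, norm_mul, norm_neg, Complex.norm_I, one_mul]
      refine (norm_add_le _ _).trans (add_le_add ((norm_add_le _ _).trans (add_le_add
        ((norm_add_le _ _).trans (add_le_add ?_ ?_)) ?_)) ?_)
      · simp [nw, abs_of_pos hr0]
      · simp only [norm_mul, nw, Complex.norm_real, Real.norm_eq_abs, abs_of_pos hr0, one_mul]; gcongr
      · simp only [norm_mul, norm_pow, nw, Complex.norm_real, Real.norm_eq_abs, abs_of_pos hr0, one_mul, one_pow, Complex.norm_natCast, Complex.norm_ofNat]; gcongr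
      · simp only [norm_mul, norm_pow, nw, Complex.norm_real, Real.norm_eq_abs, abs_of_pos hr0, one_mul, one_pow, Complex.norm_natCast]; gcongr
    rw [pow_zero, mul_one]
    refine this.trans ?_
    rw [hLdef, ← hn]
    have r2 : 1 ≤ r ^ 2 := one_le_pow₀ hr
    have r3 : r ≤ r ^ 3 := by nlinarith
    have r23 : r ^ 2 ≤ r ^ 3 := by nlinarith
    have mm : (0:ℝ) ≤ m := by positivity
    have cc : (0:ℝ) ≤ c := by positivity
    calc c * r + r * X + 3 * m * r ^ 2 * X + m ^ 2 * r ^ 3 * X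
        ≤ c * r ^ 3 + r ^ 3 * X + 3 * m * r ^ 3 * X + m ^ 2 * r ^ 3 * X := by gcongr
      _ ≤ c * r ^ 3 + r ^ 3 * X + 3 * m * r ^ 3 * X + m ^ 2 * r ^ 3 * X + (3 * m + m ^ 2) * r ^ 3 * c := by
        have : 0 ≤ (3 * m + m ^ 2) * r ^ 3 * c := by positivity
        linarith
      _ = _ := by ring
  have b2 := taylor_step k2 k3 d2 z2 L hL 0 b3
  have b1 := taylor_step k1 k2 d1 z1 L hL 1 b2
  have b0 := taylor_step k0 k1 d0 z0 L hL 2 b1 θ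
  convert b0 using 2
  simp only [k0, gex, hB]
  push_cast
  ring

/-- decay of the integrand -/
lemma gex_re (m c : ℕ) (hm : 0 < m) (n : ℕ) (r : ℝ) (hr : 1 ≤ r)
    (hn : r * (Real.exp (m * r) + c) = n) (θ : ℝ) (hθ : |θ| ≤ Real.pi) (y : ℝ)
    (hy : m * r * (1 - Real.cos θ) ≤ (1 + 2 * m) * y - 1) (hy0 : 0 < y) :
    (gex m c n r θ).re ≤ - (1 / (5 * (1 + c) * (1 + 2 * m)) * n * θ ^ 2 / y) := by
  have hm0 : (0:ℝ) < m := by exact_mod_cast hm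
  have hr0 : 0 < r := by linarith
  set X := Real.exp (m * r) with hXdef
  have hX : 1 ≤ X := Real.one_le_exp (by positivity)
  have hcos : θ ^ 2 / 5 ≤ 1 - Real.cos θ := by
    have := Real.cos_le_one_sub_mul_cos_sq hθ
    have h2 : (1:ℝ) / 5 ≤ 2 / Real.pi ^ 2 := by
      rw [div_le_div_iff₀ (by norm_num) (by positivity)]
      have := Real.pi_lt_d2
      nlinarith [Real.pi_pos]
    nlinarith [sq_nonneg θ]
  set v := 1 - Real.cos θ with hv
  have hv0 : 0 ≤ v := le_trans (by positivity) hcos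
  set x := m * r * v with hx
  have hx0 : 0 ≤ x := by positivity
  have hre : (gex m c n r θ).re ≤ - (X / m * (x / (1 + x))) := by
    have hE : (Complex.exp (m * (r * Complex.exp (θ * Complex.I)))).re ≤ X * Real.exp (-x) := by
      refine (Complex.re_le_norm _).trans ?_
      rw [norm_E, hXdef, ← Real.exp_add]
      apply le_of_eq; congr 1; rw [hx, hv]; ring
    have e1 : (gex m c n r θ).re = c * (r * Real.cos θ) +
       (Complex.exp (m * (r * Complex.exp (θ * Complex.I)))).re / m - (c * r + X / m) := by
      have e2 : (Complex.exp (m * r)).re = X := by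
        rw [hXdef, ← Complex.exp_ofReal_re]; push_cast; rfl
      simp only [gex, Complex.sub_re, Complex.add_re, Complex.div_natCast_re, e2]
      simp [Complex.exp_ofReal_mul_I_re]
    rw [e1]
    have h3 : Real.exp (-x) ≤ 1 / (1 + x) := by
      rw [Real.exp_neg, ← one_div]
      apply one_div_le_one_div_of_le (by positivity)
      linarith [Real.add_one_le_exp x]
    have h4 : x / (1 + x) = 1 - 1 / (1 + x) := by field_simp; ring
    have h5 : (Complex.exp (m * (r * Complex.exp (θ * Complex.I)))).re / m ≤ X * (1 / (1 + x)) / m := by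
      apply div_le_div_of_nonneg_right _ hm0.le
      exact hE.trans (by gcongr)
    have h6 : (c:ℝ) * (r * Real.cos θ) ≤ c * r := by
      have := Real.cos_le_one θ
      gcongr
      nlinarith
    rw [h4]
    have : X * (1 / (1 + x)) / m = X / m * (1 / (1 + x)) := by ring
    rw [mul_sub]
    linarith
  refine hre.trans (neg_le_neg ?_)
  have hnX : n ≤ (1 + c) * (r * X) := by
    rw [← hn]
    have : r * c * 1 ≤ r * c * X := by gcongr
    linarith
  have e : X / m * (x / (1 + x)) = r * X * v / (1 + x) := by
    rw [hx]; field_simp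
  rw [e]
  calc 1 / (5 * (1 + c) * (1 + 2 * m)) * n * θ ^ 2 / y
      = n / (1 + c) * (θ ^ 2 / 5) / ((1 + 2 * m) * y) := by field_simp
    _ ≤ r * X * v / ((1 + 2 * m) * y) := by
      gcongr
      rw [div_le_iff₀ (by positivity)]; linarith
    _ ≤ r * X * v / (1 + x) := by
      gcongr
      linarith

lemma cexp_sub_le (a b : ℂ) (M : ℝ) (ha : a.re ≤ M) (hb : b.re ≤ M) :
    ‖Complex.exp a - Complex.exp b‖ ≤ Real.exp M * ‖a - b‖ := by
  refine Convex.norm_image_sub_le_of_norm_hasDerivWithin_le (f := Complex.exp) (f' := Complex.exp)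
    (s := {z : ℂ | z.re ≤ M}) (x := b) (y := a)
    (fun x _ => (Complex.hasDerivAt_exp x).hasDerivWithinAt) ?_ (convex_halfSpace_re_le M) hb ha
  intro x hx
  rw [Complex.norm_exp]
  exact Real.exp_le_exp.mpr hx

lemma moment_integrable (a : ℝ) (ha : 0 < a) (k : ℕ) :
    Integrable (fun x : ℝ => |x| ^ k * Real.exp (-a * x ^ 2)) := by
  have h := (integrable_rpow_mul_exp_neg_mul_sq ha (s := k) (by
    have : (0:ℝ) ≤ k := by positivity
    linarith)).norm
  refine h.congr (Eventually.of_forall fun x => ?_)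
  simp [Real.rpow_natCast]

lemma moment_eq (a : ℝ) (ha : 0 < a) (k : ℕ) :
    ∫ x : ℝ, |x| ^ k * Real.exp (-a * x ^ 2) =
      a ^ (-((k : ℝ) + 1) / 2) * Real.Gamma (((k : ℝ) + 1) / 2) := by
  have h := integral_comp_abs (f := fun x : ℝ => x ^ k * Real.exp (-a * x ^ 2))
  simp only [sq_abs] at h
  rw [h]
  have h2 := integral_rpow_mul_exp_neg_mul_rpow (p := 2) (q := k) (b := a) (by norm_num)
    (by have : (0:ℝ) ≤ k := by positivity
        linarith) ha
  have h3 : ∫ x in Set.Ioi (0:ℝ), x ^ k * Real.exp (-a * x ^ 2) =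
     ∫ x in Set.Ioi (0:ℝ), x ^ (k:ℝ) * Real.exp (-a * x ^ (2:ℝ)) := by
    congr 1; ext x; simp
  rw [h3, h2]
  ring_nf

lemma moment3 (a : ℝ) (ha : 0 < a) :
    ∫ x : ℝ, |x| ^ 3 * Real.exp (-a * x ^ 2) = 1 / a ^ 2 := by
  rw [moment_eq a ha]
  have : ((3:ℕ):ℝ) + 1 = 4 := by norm_num
  rw [this]
  have : (4:ℝ)/2 = 2 := by norm_num
  have h2 : (-4:ℝ)/2 = -(2:ℕ) := by norm_num
  rw [this, h2, Real.Gamma_two, Real.rpow_neg ha.le, Real.rpow_natCast]; simp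

lemma moment5 (a : ℝ) (ha : 0 < a) :
    ∫ x : ℝ, |x| ^ 5 * Real.exp (-a * x ^ 2) = 2 / a ^ 3 := by
  rw [moment_eq a ha]
  have : ((5:ℕ):ℝ) + 1 = 6 := by norm_num
  rw [this]
  have : (6:ℝ)/2 = (2:ℕ)+1 := by norm_num
  have h2 : (-6:ℝ)/2 = -(3:ℕ) := by norm_num
  rw [this, h2, Real.Gamma_nat_eq_factorial, Real.rpow_neg ha.le, Real.rpow_natCast]; simp [Nat.factorial]
  ring

noncomputable def kap (m c : ℕ) : ℝ := 1 / (5 * (1 + c) * (1 + 2 * m))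

lemma kap_pos (m c : ℕ) : 0 < kap m c := by unfold kap; positivity

lemma kap_le (m c : ℕ) : kap m c ≤ 1 / 2 := by
  unfold kap
  apply one_div_le_one_div_of_le (by norm_num)
  have : (0:ℝ) ≤ c := by positivity
  have : (0:ℝ) ≤ m := by positivity
  nlinarith [mul_nonneg ‹(0:ℝ) ≤ c› ‹(0:ℝ) ≤ m›]

lemma pointwise (m c : ℕ) (hm : 0 < m) (n : ℕ) (r : ℝ) (hr : 1 ≤ r)
    (hn : r * (Real.exp (m * r) + c) = n) (θ : ℝ) :
    ‖(Set.Ioc (-Real.pi) Real.pi).indicator (fun θ => Complex.exp (gex m c n r θ)) θ -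
      ((Real.exp (-((n + m * r ^ 2 * Real.exp (m * r)) / 2) * θ ^ 2) : ℝ) : ℂ)‖ ≤
      (1 + 3 * m + m ^ 2) * r ^ 2 * n * (|θ| ^ 3 * Real.exp (-(kap m c * n) * θ ^ 2)
        + r * (|θ| ^ 5 * Real.exp (-(kap m c * n / r) * θ ^ 2))) := by
  have hr0 : 0 < r := by linarith
  have hm0 : (1:ℝ) ≤ m := by exact_mod_cast hm
  set X := Real.exp (m * r) with hXdef
  have hX : 1 ≤ X := Real.one_le_exp (by positivity)
  have hn1 : (1:ℝ) ≤ n := by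
    rw [← hn]
    have : (0:ℝ) ≤ c := by positivity
    nlinarith
  set L : ℝ := (1 + 3 * m + m ^ 2) * r ^ 2 * n with hL
  have hL1 : 1 ≤ L := by
    have h1 : 1 ≤ r ^ 2 := one_le_pow₀ hr
    have h2 : (1:ℝ) ≤ 1 + 3 * m + m ^ 2 := by nlinarith
    have : 1 ≤ (1 + 3 * m + m ^ 2) * r ^ 2 := one_le_mul_of_one_le_of_one_le h2 h1
    exact one_le_mul_of_one_le_of_one_le this hn1
  have hk := kap_pos m c
  have hk2 := kap_le m c
  set B : ℝ := n + m * r ^ 2 * X with hB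
  have hBn : (n:ℝ) ≤ B := by
    have : 0 ≤ m * r ^ 2 * X := by positivity
    linarith
  have hBk : -(B / 2) * θ ^ 2 ≤ -(kap m c * n) * θ ^ 2 := by
    have : kap m c * n ≤ 1 / 2 * B := by gcongr
    nlinarith [sq_nonneg θ]
  have hBk' : -(kap m c * n) * θ ^ 2 ≤ -(kap m c * n / r) * θ ^ 2 := by
    have : kap m c * n / r ≤ kap m c * n := div_le_self (by positivity) hr
    nlinarith [sq_nonneg θ]
  have p1 : 0 ≤ |θ| ^ 3 * Real.exp (-(kap m c * n) * θ ^ 2) := by positivity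
  have p2 : 0 ≤ r * (|θ| ^ 5 * Real.exp (-(kap m c * n / r) * θ ^ 2)) := by positivity
  by_cases hθ : θ ∈ Set.Ioc (-Real.pi) Real.pi
  · rw [Set.indicator_of_mem hθ]
    have hθ' : |θ| ≤ Real.pi := abs_le.mpr ⟨hθ.1.le, hθ.2⟩
    have ht := gex_taylor m c hm n r hr hn θ
    rw [← hXdef, ← hB, ← hL] at ht
    rw [Complex.ofReal_exp]
    have e : -(B / 2) * θ ^ 2 = -B / 2 * θ ^ 2 := by ring
    rw [e] at hBk ⊢
    by_cases hs : r * θ ^ 2 ≤ 1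
    · have hre := gex_re m c hm n r hr hn θ hθ' 1 (by
        have := Real.one_sub_sq_div_two_le_cos (x := θ)
        have h1 : 1 - Real.cos θ ≤ θ ^ 2 / 2 := by linarith
        have : m * r * (1 - Real.cos θ) ≤ m * r * (θ ^ 2 / 2) := by gcongr
        nlinarith) one_pos
      have hre' : (gex m c n r θ).re ≤ -(kap m c * n) * θ ^ 2 := by
        refine hre.trans (le_of_eq ?_); rw [kap]; ring
      refine (cexp_sub_le _ _ _ hre' (by rw [Complex.ofReal_re]; exact hBk)).trans ?_
      calc _ ≤ Real.exp (-(kap m c * n) * θ ^ 2) * (L * |θ| ^ 3) := by gcongr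
        _ = L * (|θ| ^ 3 * Real.exp (-(kap m c * n) * θ ^ 2)) := by ring
        _ ≤ _ := by gcongr; linarith
    · push Not at hs
      have hre := gex_re m c hm n r hr hn θ hθ' r (by
        have := Real.neg_one_le_cos θ
        have h1 : 1 - Real.cos θ ≤ 2 := by linarith
        have : m * r * (1 - Real.cos θ) ≤ m * r * 2 := by gcongr
        nlinarith) hr0
      have hre' : (gex m c n r θ).re ≤ -(kap m c * n / r) * θ ^ 2 := by
        refine hre.trans (le_of_eq ?_); rw [kap]; ring
      refine (cexp_sub_le _ _ _ hre' (by rw [Complex.ofReal_re]; exact hBk.trans hBk')).trans ?_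
      calc _ ≤ Real.exp (-(kap m c * n / r) * θ ^ 2) * (L * |θ| ^ 3) := by gcongr
        _ = L * (1 * (|θ| ^ 3 * Real.exp (-(kap m c * n / r) * θ ^ 2))) := by ring
        _ ≤ L * (r * θ ^ 2 * (|θ| ^ 3 * Real.exp (-(kap m c * n / r) * θ ^ 2))) := by gcongr
        _ = L * (r * (|θ| ^ 5 * Real.exp (-(kap m c * n / r) * θ ^ 2))) := by
          rw [← sq_abs θ]; ring
        _ ≤ _ := by gcongr; linarith
  · rw [Set.indicator_of_notMem hθ, zero_sub, norm_neg, Complex.norm_real, Real.norm_eq_abs, Real.abs_exp]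
    have h1 : 1 ≤ |θ| := by
      by_contra h
      push Not at h
      have h3 := Real.pi_gt_three
      have := abs_lt.mp h
      exact hθ ⟨by linarith, by linarith⟩
    calc Real.exp (-(B / 2) * θ ^ 2) ≤ 1 * (1 * Real.exp (-(kap m c * n) * θ ^ 2)) := by
          rw [one_mul, one_mul]; exact Real.exp_le_exp.mpr hBk
      _ ≤ L * (|θ| ^ 3 * Real.exp (-(kap m c * n) * θ ^ 2)) := by
        gcongr
        exact one_le_pow₀ h1
      _ ≤ _ := by gcongr; linarith

lemma integral_est (m c : ℕ) (hm : 0 < m) (n : ℕ) (r : ℝ) (hr : 1 ≤ r)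
    (hn : r * (Real.exp (m * r) + c) = n) :
    |2 * Real.pi * Ttot m c n * r ^ n /
      (n.factorial * Real.exp (c * r + (Real.exp (m * r) - 1) / m)) -
      √(2 * Real.pi / (n + m * r ^ 2 * Real.exp (m * r)))| ≤
     (1 + 3 * m + m ^ 2) * r ^ 2 * n * (1 / (kap m c * n) ^ 2 + r * (2 / (kap m c * n / r) ^ 3)) := by
  have hr0 : 0 < r := by linarith
  have hn1 : (0:ℝ) < n := by
    rw [← hn]
    positivity
  have hk := kap_pos m c
  have hb1 := moment_integrable (kap m c * n) (by positivity) 3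
  have hb2 := moment_integrable (kap m c * n / r) (by positivity) 5
  have hpos : 0 < (n + m * r ^ 2 * Real.exp (m * r)) / 2 := by positivity
  have hg := (integrable_exp_neg_mul_sq hpos)
  have hg' : Integrable (fun x : ℝ => ((Real.exp (-((n + m * r ^ 2 * Real.exp (m * r)) / 2) * x ^ 2) : ℝ) : ℂ)) :=
    hg.ofReal
  have hcont : Continuous (fun θ : ℝ => Complex.exp (gex m c n r θ)) := by
    unfold gex; fun_prop
  have hi : Integrable ((Set.Ioc (-Real.pi) Real.pi).indicator (fun θ : ℝ => Complex.exp (gex m c n r θ))) := by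
    rw [integrable_indicator_iff measurableSet_Ioc]
    exact (hcont.integrableOn_Icc).mono_set Set.Ioc_subset_Icc_self
  have key := norm_integral_le_of_norm_le (((hb1.add (hb2.const_mul r))).const_mul
    ((1 + 3 * m + m ^ 2) * r ^ 2 * n)) (Eventually.of_forall (pointwise m c hm n r hr hn))
  rw [integral_sub hi hg', integral_indicator measurableSet_Ioc,
    ← intervalIntegral.integral_of_le (by linarith [Real.pi_pos]), ← Ttot_gex m c hm n r hr0,
    integral_complex_ofReal, integral_gaussian, ← Complex.ofReal_sub, Complex.norm_real, Real.norm_eq_abs,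
    integral_const_mul] at key
  have e : ∫ a : ℝ, ((fun x : ℝ => |x| ^ 3 * Real.exp (-(kap m c * n) * x ^ 2)) +
     fun x : ℝ => r * (|x| ^ 5 * Real.exp (-(kap m c * n / r) * x ^ 2))) a = 
     1 / (kap m c * n) ^ 2 + r * (2 / (kap m c * n / r) ^ 3) := by
    rw [integral_add' hb1 (hb2.const_mul r), moment3 _ (by positivity), integral_const_mul,
      moment5 _ (by positivity)]
  rw [e] at key
  convert key using 4
  field_simp

lemma stirling_upper (n : ℕ) (hn : 1 ≤ n) :
    Stirling.stirlingSeq n ≤ √Real.pi * Real.exp (1 / (12 * n)) := by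
  obtain ⟨k, rfl⟩ : ∃ k, n = k + 1 := ⟨n - 1, by omega⟩
  let h : ℕ → ℝ := fun k => Real.log (Stirling.stirlingSeq (k + 1)) - 1 / (12 * ((k + 1 : ℕ) : ℝ))
  have hmono : Monotone h := by
    refine monotone_nat_of_le_succ fun k => ?_
    have := Stirling.log_stirlingSeq_sdiff_le (k + 1)
    have e : 1 / (12 * ((k + 1 : ℕ) : ℝ) * (((k + 1 : ℕ) : ℝ) + 1)) =
      1 / (12 * ((k + 1 : ℕ) : ℝ)) - 1 / (12 * ((k + 1 + 1 : ℕ) : ℝ)) := by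
      push_cast; field_simp; ring
    rw [e] at this
    simp only [h]
    linarith
  have hpi : √Real.pi ≠ 0 := by have := Real.pi_pos; positivity
  have hlim : Tendsto h atTop (nhds (Real.log √Real.pi - 0)) := by
    refine Tendsto.sub ?_ ?_
    · exact ((Real.continuousAt_log hpi).tendsto.comp Stirling.tendsto_stirlingSeq_sqrt_pi).comp
        (tendsto_add_atTop_nat 1)
    · have : Tendsto (fun n : ℕ => 1 / (12 * (n : ℝ))) atTop (nhds 0) := by
        have := tendsto_one_div_atTop_nhds_zero_nat (𝕜 := ℝ)
        have := this.const_mul (1/12)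
        simp only [mul_zero] at this
        refine this.congr fun n => ?_
        ring
      exact this.comp (tendsto_add_atTop_nat 1)
  have := hmono.ge_of_tendsto hlim k
  simp only [h, sub_zero] at this
  have h1 : Real.log (Stirling.stirlingSeq (k+1)) ≤ Real.log √Real.pi + 1 / (12 * ((k + 1 : ℕ) : ℝ)) := by
    linarith
  rw [Real.log_le_iff_le_exp (Stirling.stirlingSeq'_pos k), Real.exp_add, Real.exp_log (by positivity)] at h1
  exact h1

lemma exp_sub_one_le (A K : ℝ) (h0 : 0 ≤ A) (hK : A ≤ K) : Real.exp A - 1 ≤ A * Real.exp K := by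
  have h1 := Real.add_one_le_exp (-A)
  have h2 : Real.exp A * Real.exp (-A) = 1 := by rw [← Real.exp_add]; simp
  have h3 : Real.exp A ≤ Real.exp K := Real.exp_le_exp.mpr hK
  have h4 := Real.exp_pos A
  nlinarith

section
variable {m c n : ℕ} {r : ℝ}

lemma basic_exp (hm : 0 < m) (hr : 1 ≤ r) (hn : r * (Real.exp (m * r) + c) = n) : Real.exp r ≤ n := by
  have hm0 : (1:ℝ) ≤ m := by exact_mod_cast hm
  have h1 : Real.exp r ≤ Real.exp (m * r) := Real.exp_le_exp.mpr (by nlinarith)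
  have h2 := Real.exp_pos (m * r)
  have h3 : (0:ℝ) ≤ c := by positivity
  rw [← hn]; nlinarith

lemma basic_n (hm : 0 < m) (hr : 1 ≤ r) (hn : r * (Real.exp (m * r) + c) = n) : (1:ℝ) ≤ n :=
  (Real.one_le_exp (by linarith)).trans (basic_exp hm hr hn)

lemma basic_r4 (hm : 0 < m) (hr : 1 ≤ r) (hn : r * (Real.exp (m * r) + c) = n) : r ^ 4 ≤ 24 * n := by
  have h := (Real.pow_div_factorial_le_exp r (by linarith) 4).trans (basic_exp hm hr hn)
  rw [div_le_iff₀ (by positivity)] at h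
  norm_num [Nat.factorial] at h
  linarith

lemma basic_r6 (hm : 0 < m) (hr : 1 ≤ r) (hn : r * (Real.exp (m * r) + c) = n) : r ^ 6 ≤ 720 * n := by
  have h := (Real.pow_div_factorial_le_exp r (by linarith) 6).trans (basic_exp hm hr hn)
  rw [div_le_iff₀ (by positivity)] at h
  norm_num [Nat.factorial] at h
  linarith

lemma basic_r2 (hm : 0 < m) (hr : 1 ≤ r) (hn : r * (Real.exp (m * r) + c) = n) : r ^ 2 ≤ 2 * n := by
  have h := (Real.pow_div_factorial_le_exp r (by linarith) 2).trans (basic_exp hm hr hn)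
  rw [div_le_iff₀ (by positivity)] at h
  norm_num [Nat.factorial] at h
  linarith

lemma psi_le (hm : 0 < m) (hr : 1 ≤ r) (hn : r * (Real.exp (m * r) + c) = n) :
    r ^ 3 / √n ≤ 27 := by
  have h1 := basic_n hm hr hn
  have h6 := basic_r6 hm hr hn
  rw [div_le_iff₀ (by positivity)]
  have : (r ^ 3) ^ 2 ≤ (27 * √n) ^ 2 := by
    rw [mul_pow, Real.sq_sqrt (by positivity)]; nlinarith
  exact (pow_le_pow_iff_left₀ (by positivity) (by positivity) (by norm_num)).mp this

lemma psi_phi (hm : 0 < m) (hr : 1 ≤ r) (hn : r * (Real.exp (m * r) + c) = n) :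
    r ^ 3 / √n ≤ (Real.log n) ^ ((7 : ℝ) / 2) / √n := by
  have h1 := basic_n hm hr hn
  have h2 : r ≤ Real.log n := by
    rw [Real.le_log_iff_exp_le (by linarith)]; exact basic_exp hm hr hn
  gcongr
  calc r ^ 3 ≤ Real.log n ^ 3 := by gcongr
    _ = Real.log n ^ ((3:ℕ):ℝ) := by rw [Real.rpow_natCast]
    _ ≤ _ := Real.rpow_le_rpow_of_exponent_le (by linarith) (by norm_num)

lemma r2n_le (hr : 1 ≤ r) (h1 : (1:ℝ) ≤ n) : r ^ 2 / n ≤ r ^ 3 / √n := by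
  have h2 : √n ≤ n := Real.sqrt_le_self_iff.mpr (Or.inr h1)
  have h3 : r ^ 2 ≤ r ^ 3 := pow_le_pow_right₀ hr (by norm_num)
  gcongr

lemma f1_est (hm : 0 < m) (hr : 1 ≤ r) (hn : r * (Real.exp (m * r) + c) = n) :
    |Stirling.stirlingSeq n / √Real.pi - 1| ≤ Real.exp 1 * (r ^ 3 / √n) := by
  have h1 := basic_n hm hr hn
  have hn1 : 1 ≤ n := by exact_mod_cast h1
  have hpi := Real.pi_pos
  have hs : 0 < √Real.pi := by positivity
  have lo := Stirling.sqrt_pi_le_stirlingSeq (n := n) (by omega)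
  have up := stirling_upper n hn1
  have lo' : 1 ≤ Stirling.stirlingSeq n / √Real.pi := (one_le_div hs).mpr lo
  have up' : Stirling.stirlingSeq n / √Real.pi ≤ Real.exp (1 / (12 * n)) := by
    rw [div_le_iff₀ hs]; linarith
  rw [abs_of_nonneg (by linarith)]
  have h12 : 1 / (12 * (n:ℝ)) ≤ 1 / n := by
    apply one_div_le_one_div_of_le (by linarith); linarith
  have hn' : 1 / (n:ℝ) ≤ 1 := by rw [div_le_one (by linarith)]; exact h1
  have h3 := exp_sub_one_le (1 / (12 * n)) 1 (by positivity) (h12.trans hn')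
  have h4 : 1 / (n:ℝ) ≤ r ^ 3 / √n := by
    refine le_trans ?_ (r2n_le hr h1)
    gcongr
    exact one_le_pow₀ hr
  calc _ ≤ 1 / (12 * (n:ℝ)) * Real.exp 1 := by linarith
    _ ≤ (r ^ 3 / √n) * Real.exp 1 :=
      mul_le_mul_of_nonneg_right (h12.trans h4) (Real.exp_pos 1).le
    _ = _ := by ring

lemma f2_est (hm : 0 < m) (hr : 1 ≤ r) (hn : r * (Real.exp (m * r) + c) = n) :
    |2 * Real.pi * Ttot m c n * r ^ n /
      (n.factorial * Real.exp (c * r + (Real.exp (m * r) - 1) / m)) *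
      √((n + m * r ^ 2 * Real.exp (m * r)) / (2 * Real.pi)) - 1| ≤
     (1 + m) * (1 + 3 * m + m ^ 2) * (1 / kap m c ^ 2 + 48 / kap m c ^ 3) * (r ^ 3 / √n) := by
  have h1 := basic_n hm hr hn
  have h := integral_est m c hm n r hr hn
  have hpi := Real.pi_gt_three
  have hk := kap_pos m c
  have hm0 : (1:ℝ) ≤ m := by exact_mod_cast hm
  have hc0 : (0:ℝ) ≤ c := by positivity
  have h4 := basic_r4 hm hr hn
  set J := 2 * Real.pi * Ttot m c n * r ^ n /
      (n.factorial * Real.exp (c * r + (Real.exp (m * r) - 1) / m)) with hJ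
  set X := Real.exp (m * r) with hX
  have hX0 : 0 < X := Real.exp_pos _
  set B := n + m * r ^ 2 * X with hB
  have hB0 : 0 < B := by positivity
  have hBle : √(B / (2 * Real.pi)) ≤ (1 + m) * r * √n := by
    rw [Real.sqrt_le_left (by positivity), mul_pow, Real.sq_sqrt (by positivity)]
    have hBn : B ≤ (1 + m * r) * n := by
      rw [hB, ← hn]
      have : 0 ≤ m * r ^ 2 * c := by positivity
      nlinarith
    have e1 : 1 + m * r ≤ ((1 + m) * r) ^ 2 := by nlinarith
    calc B / (2 * Real.pi) ≤ B := div_le_self hB0.le (by linarith)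
      _ ≤ (1 + m * r) * n := hBn
      _ ≤ _ := by gcongr
  have hinv : √(2 * Real.pi / B) * √(B / (2 * Real.pi)) = 1 := by
    rw [← Real.sqrt_mul (by positivity)]
    rw [show 2 * Real.pi / B * (B / (2 * Real.pi)) = 1 by field_simp]
    simp
  have e : J * √(B / (2 * Real.pi)) - 1 = (J - √(2 * Real.pi / B)) * √(B / (2 * Real.pi)) := by
    rw [sub_mul, hinv]
  rw [e, abs_mul, abs_of_nonneg (Real.sqrt_nonneg (B / (2 * Real.pi)))]
  have hsn : √(n:ℝ) * √n = n := Real.mul_self_sqrt (by positivity)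
  have hsn0 : 0 < √(n:ℝ) := by positivity
  have r0 : 0 < r := by linarith
  have hb : 1 / (kap m c * n) ^ 2 + r * (2 / (kap m c * n / r) ^ 3) ≤
      (1 / kap m c ^ 2 + 48 / kap m c ^ 3) / n ^ 2 := by
    have e1 : 1 / (kap m c * n) ^ 2 + r * (2 / (kap m c * n / r) ^ 3) =
      1 / kap m c ^ 2 / n ^ 2 + 2 * r ^ 4 / (kap m c ^ 3 * n ^ 3) := by field_simp
    have e2 : 2 * r ^ 4 / (kap m c ^ 3 * n ^ 3) ≤ 2 * (24 * n) / (kap m c ^ 3 * n ^ 3) := by gcongr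
    have e3 : 2 * (24 * n) / (kap m c ^ 3 * n ^ 3) = 48 / kap m c ^ 3 / n ^ 2 := by
      field_simp; norm_num
    rw [e1, add_div, ← e3]
    linarith
  calc _ ≤ ((1 + 3 * m + m ^ 2) * r ^ 2 * n * ((1 / kap m c ^ 2 + 48 / kap m c ^ 3) / n ^ 2)) *
      ((1 + m) * r * √n) := by
        gcongr
        exact h.trans (by gcongr)
    _ = _ := by
      have e5 : √(n:ℝ) / n = 1 / √n := by
        rw [div_eq_div_iff (by positivity) (by positivity), hsn, one_mul]
      have e6 : (n:ℝ) / n ^ 2 = 1 / n := by field_simp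
      calc _ = (1 + m) * (1 + 3 * m + m ^ 2) * (1 / kap m c ^ 2 + 48 / kap m c ^ 3) * r ^ 3 * ((n:ℝ) / n ^ 2 * √n) := by ring
        _ = (1 + m) * (1 + 3 * m + m ^ 2) * (1 / kap m c ^ 2 + 48 / kap m c ^ 3) * r ^ 3 * (√n / n) := by
          rw [e6]; ring
        _ = _ := by rw [e5]; ring

lemma f3_est (hm : 0 < m) (hr : 1 ≤ r) (hn : r * (Real.exp (m * r) + c) = n) :
    |Real.exp (n * Real.log (1 + c / Real.exp (m * r)) - c * r) - 1| ≤
      c ^ 2 * (1 + c) * Real.exp (c ^ 2 * (1 + c) * 2) * (r ^ 3 / √n) := by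
  have h1 := basic_n hm hr hn
  have h2 := basic_r2 hm hr hn
  have hc0 : (0:ℝ) ≤ c := by positivity
  have r0 : 0 < r := by linarith
  have hX1 : 1 ≤ Real.exp (m * r) := Real.one_le_exp (by positivity)
  set X := Real.exp (m * r) with hX
  have hX0 : 0 < X := by linarith
  set u := c / X with hu
  have hu0 : 0 ≤ u := by positivity
  have hnu : (n:ℝ) = r * X * (1 + u) := by rw [← hn, hu]; field_simp
  have huX : X * u = c := by rw [hu]; field_simp
  have lup : Real.log (1 + u) ≤ u := by
    have := Real.log_le_sub_one_of_pos (show 0 < 1 + u by linarith); linarith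
  have llo : u / (1 + u) ≤ Real.log (1 + u) := by
    have := Real.one_sub_inv_le_log_of_pos (show 0 < 1 + u by linarith)
    have e : u / (1 + u) = 1 - (1 + u)⁻¹ := by field_simp; ring
    rw [e]; exact this
  have A0 : 0 ≤ n * Real.log (1 + u) - c * r := by
    have : n * (u / (1 + u)) ≤ n * Real.log (1 + u) := by gcongr
    have e : n * (u / (1 + u)) = c * r := by rw [hnu, ← huX]; field_simp
    linarith
  have A1 : n * Real.log (1 + u) - c * r ≤ c ^ 2 * (1 + c) * (r ^ 2 / n) := by
    have : n * Real.log (1 + u) ≤ n * u := by gcongr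
    have e : n * u = c * r + c * r * u := by rw [hnu, ← huX]; ring
    have e2 : u ≤ c * (1 + c) * r / n := by
      rw [hu, div_le_div_iff₀ hX0 (by linarith), ← hn]
      have : c * (r * (X + c)) ≤ c * (r * (X + c * X)) := by gcongr; nlinarith
      linarith
    have e3 : c * r * u ≤ c * r * (c * (1 + c) * r / n) := by gcongr
    have e4 : c * r * (c * (1 + c) * r / n) = c ^ 2 * (1 + c) * (r ^ 2 / n) := by ring
    linarith
  have A2 : c ^ 2 * (1 + c) * (r ^ 2 / n) ≤ (c:ℝ) ^ 2 * (1 + c) * 2 := by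
    gcongr
    rw [div_le_iff₀ (by linarith)]; linarith
  have h3 := exp_sub_one_le _ _ A0 (A1.trans A2)
  rw [abs_of_nonneg (by linarith [Real.one_le_exp A0])]
  calc _ ≤ c ^ 2 * (1 + c) * (r ^ 3 / √n) * Real.exp (c ^ 2 * (1 + c) * 2) := by
        refine h3.trans ?_
        gcongr
        refine A1.trans ?_
        gcongr ?_ * ?_
        exact r2n_le hr h1
    _ = _ := by ring

lemma f4_est (hm : 0 < m) (hr : 1 ≤ r) (hn : r * (Real.exp (m * r) + c) = n) :
    |√(n * (m * r + 1) / (n + m * r ^ 2 * Real.exp (m * r))) - 1| ≤ m * c * (r ^ 3 / √n) := by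
  have h1 := basic_n hm hr hn
  have r0 : 0 < r := by linarith
  have hc0 : (0:ℝ) ≤ c := by positivity
  set X := Real.exp (m * r) with hX
  have hX0 : 0 < X := Real.exp_pos _
  set B := n + m * r ^ 2 * X with hB
  have hBn : n ≤ B := by
    have : 0 ≤ m * r ^ 2 * X := by positivity
    linarith
  have hB0 : 0 < B := by linarith
  have e : n * (m * r + 1) = B + m * c * r ^ 2 := by
    rw [hB, mul_add, mul_one]; nth_rewrite 1 [← hn]; ring
  have eq : n * (m * r + 1) / B = 1 + m * c * (r ^ 2 / B) := by
    rw [e]; field_simp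
  have q0 : 0 ≤ m * c * (r ^ 2 / B) := by positivity
  rw [eq]
  have lo : 1 ≤ √(1 + m * c * (r ^ 2 / B)) := Real.one_le_sqrt.mpr (by linarith)
  have up : √(1 + m * c * (r ^ 2 / B)) ≤ 1 + m * c * (r ^ 2 / B) :=
    Real.sqrt_le_self_iff.mpr (Or.inr (by linarith))
  rw [abs_of_nonneg (by linarith)]
  have : m * c * (r ^ 2 / B) ≤ m * c * (r ^ 3 / √n) := by
    gcongr ?_ * ?_
    refine le_trans ?_ (r2n_le hr h1)
    gcongr
  linarith

lemma factor_identity (hm : 0 < m) (hr : 1 ≤ r) (hn : r * (Real.exp (m * r) + c) = n) :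
    (Ttot m c n : ℝ) / ((1 / √(m * r + 1)) *
              Real.exp (m * n * r - n + n / (m * r) + 2 * c * r - (1 + c) / m)) =
    (Stirling.stirlingSeq n / √Real.pi) *
    (2 * Real.pi * Ttot m c n * r ^ n /
      (n.factorial * Real.exp (c * r + (Real.exp (m * r) - 1) / m)) *
      √((n + m * r ^ 2 * Real.exp (m * r)) / (2 * Real.pi))) *
    Real.exp (n * Real.log (1 + c / Real.exp (m * r)) - c * r) *
    √(n * (m * r + 1) / (n + m * r ^ 2 * Real.exp (m * r))) := by
  have h1 := basic_n hm hr hn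
  have hm0 : (0:ℝ) < m := by exact_mod_cast hm
  have hn0 : (0:ℝ) < n := by linarith
  have r0 : 0 < r := by linarith
  have hc0 : (0:ℝ) ≤ c := by positivity
  have hpi := Real.pi_pos
  have hXn : Real.exp (m * n * r) = Real.exp (m * r) ^ n := by
    rw [← Real.exp_nat_mul]; congr 1; ring
  set X := Real.exp (m * r) with hX
  have hX0 : 0 < X := Real.exp_pos _
  set B := n + m * r ^ 2 * X with hB
  have hB0 : 0 < B := by positivity
  set Q := Real.exp (c * r + (X - 1) / m) with hQ
  have hQ0 : 0 < Q := Real.exp_pos _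
  set D := Real.exp (c * r) with hD
  have hD0 : 0 < D := Real.exp_pos _
  have hW : Real.exp (m * n * r - n + n / (m * r) + 2 * c * r - (1 + c) / m) =
      X ^ n * Q * D / Real.exp n := by
    rw [← hXn, hQ, hD, ← Real.exp_add, ← Real.exp_add, ← Real.exp_sub]
    congr 1
    have : n / (m * r) = (X + c) / m := by rw [← hn]; field_simp
    rw [this]; ring
  have h3 : Real.exp (n * Real.log (1 + c / X) - c * r) = (n:ℝ) ^ n / (r ^ n * X ^ n) / D := by
    rw [Real.exp_sub, Real.exp_nat_mul, Real.exp_log (by positivity)]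
    have : 1 + c / X = n / (r * X) := by rw [← hn]; field_simp
    rw [this, div_pow, mul_pow]
  have he : (n / Real.exp 1) ^ n = (n:ℝ) ^ n / Real.exp n := by
    rw [div_pow, ← Real.exp_nat_mul, mul_one]
  have hf : (n.factorial : ℝ) ≠ 0 := by exact_mod_cast n.factorial_ne_zero
  have hE := Real.exp_pos n
  have s1 : √(2 * (n:ℝ)) = √2 * √n := Real.sqrt_mul (by norm_num) _
  have s2 : √(B / (2 * Real.pi)) = √B / (√2 * √Real.pi) := by
    rw [Real.sqrt_div hB0.le, Real.sqrt_mul (by norm_num)]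
  have s3 : √(n * (m * r + 1) / B) = √n * √(m * r + 1) / √B := by
    rw [Real.sqrt_div (by positivity), Real.sqrt_mul (by positivity)]
  have t1 : √2 ^ 2 = (2:ℝ) := Real.sq_sqrt (by norm_num)
  have t2 : √Real.pi ^ 2 = Real.pi := Real.sq_sqrt hpi.le
  have p1 : 0 < √(m * r + 1) := by positivity
  have p2 : 0 < √B := by positivity
  have p3 : 0 < √(n:ℝ) := by positivity
  have p4 : 0 < √Real.pi := by positivity
  rw [hW, h3, Stirling.stirlingSeq, he, s1, s2, s3]
  have hnn : (0:ℝ) < n ^ n := by positivity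
  generalize √(m * r + 1) = a1 at *
  generalize √B = a2 at *
  generalize √(n:ℝ) = a3 at *
  generalize √Real.pi = a4 at *
  rw [← t2]
  generalize (n:ℝ) ^ n = a5 at *
  have p5 : 0 < √(2:ℝ) := by positivity
  generalize √(2:ℝ) = a6 at *
  rw [← t1]
  field_simp
end

lemma prodO (a b ψ : ℕ → ℝ) (hψ : ψ =O[atTop] (fun _ => (1:ℝ)))
    (ha : (fun n => a n - 1) =O[atTop] ψ) (hb : (fun n => b n - 1) =O[atTop] ψ) :
    (fun n => a n * b n - 1) =O[atTop] ψ := by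
  have h1 : (fun n => (a n - 1) * (b n - 1)) =O[atTop] ψ := by
    have := ha.mul (hb.trans hψ)
    simpa using this
  refine ((h1.add ha).add hb).congr_left fun n => ?_
  ring

/-- If `r n` is the unique positive solution of `r·(e^{m·r} + c) = n`, then
`T_n = (m·r+1)^{-1/2}·exp(m·n·r − n + n/(m·r) + 2·c·r − (1+c)/m)
  ·(1 + O(n^{-1/2}·log^{7/2} n))` as `n → ∞`. -/
theorem stmt_10 (m c : ℕ) (hm : 0 < m) (hc : 0 < c) (r : ℕ → ℝ)
    (hr : ∀ n : ℕ, 2 ≤ n → 0 < r n ∧ r n * (Real.exp (m * r n) + c) = n) :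
    (fun n : ℕ =>
        (Ttot m c n : ℝ) /
            ((1 / Real.sqrt (m * r n + 1)) *
              Real.exp (m * n * r n - n + n / (m * r n) + 2 * c * r n - (1 + c) / m)) - 1)
      =O[atTop]
      (fun n : ℕ => (Real.log n) ^ ((7 : ℝ) / 2) / Real.sqrt n) := by
  have hev : ∀ᶠ n : ℕ in atTop, 1 ≤ r n ∧ r n * (Real.exp (m * r n) + c) = n := by
    have h2 : ∀ᶠ n : ℕ in atTop, Real.exp m + c ≤ n :=
      tendsto_natCast_atTop_atTop.eventually_ge_atTop _
    filter_upwards [eventually_ge_atTop 2, h2] with n hn hn2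
    obtain ⟨h0, h1⟩ := hr n hn
    refine ⟨?_, h1⟩
    by_contra hlt
    push Not at hlt
    have h3 : Real.exp (m * r n) ≤ Real.exp m := by
      apply Real.exp_le_exp.mpr
      have : (0:ℝ) ≤ m := by positivity
      nlinarith
    have h4 := Real.exp_pos (m * r n)
    have h5 : (0:ℝ) < c := by exact_mod_cast hc
    nlinarith
  set ψ : ℕ → ℝ := fun n => r n ^ 3 / √(n:ℝ) with hψ
  have hψ1 : ψ =O[atTop] (fun _ => (1:ℝ)) := by
    refine Asymptotics.IsBigO.of_bound 27 ?_
    filter_upwards [hev] with n ⟨h1, h2⟩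
    have : 0 ≤ ψ n := by simp only [hψ]; positivity
    rw [Real.norm_eq_abs, abs_of_nonneg this, norm_one, mul_one]
    exact psi_le hm h1 h2
  have hψφ : ψ =O[atTop] (fun n : ℕ => (Real.log n) ^ ((7 : ℝ) / 2) / Real.sqrt n) := by
    refine Asymptotics.IsBigO.of_bound 1 ?_
    filter_upwards [hev] with n ⟨h1, h2⟩
    have : 0 ≤ ψ n := by simp only [hψ]; positivity
    rw [Real.norm_eq_abs, abs_of_nonneg this, one_mul]
    exact (psi_phi hm h1 h2).trans (le_abs_self _)
  have mk : ∀ (f : ℕ → ℝ) (C : ℝ), (∀ n : ℕ, 1 ≤ r n → r n * (Real.exp (m * r n) + c) = n →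
      |f n - 1| ≤ C * ψ n) → (fun n => f n - 1) =O[atTop] ψ := by
    intro f C hf
    refine Asymptotics.IsBigO.of_bound C ?_
    filter_upwards [hev] with n ⟨h1, h2⟩
    have : 0 ≤ ψ n := by simp only [hψ]; positivity
    rw [Real.norm_eq_abs, Real.norm_eq_abs, abs_of_nonneg this]
    exact hf n h1 h2
  have g1 := mk _ _ (fun n h1 h2 => f1_est hm h1 h2)
  have g2 := mk _ _ (fun n h1 h2 => f2_est hm h1 h2)
  have g3 := mk _ _ (fun n h1 h2 => f3_est hm h1 h2)
  have g4 := mk _ _ (fun n h1 h2 => f4_est hm h1 h2)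
  have g := prodO _ _ ψ hψ1 (prodO _ _ ψ hψ1 (prodO _ _ ψ hψ1 g1 g2) g3) g4
  refine Asymptotics.IsBigO.trans ?_ hψφ
  refine g.congr' ?_ EventuallyEq.rfl
  filter_upwards [hev] with n ⟨h1, h2⟩
  rw [factor_identity hm h1 h2]
end

section
/- Let f(x) = x·(e^{m·x} + c), and for each i ∈ {0,1,2} let t_i = t_i(n) be the unique positive real number with f(t_i) = n + i. Then as n → ∞, t_1 − t_0 = 1/(m·n) − 1/(m²·n·t_0) + O(1/(n·log² n)). -/
open Filter

set_option maxHeartbeats 2000000 in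
/-- Deterministic estimate with explicit constants. -/
lemma core_est (m c n t s L : ℝ) (hm : 1 ≤ m) (hc : 0 ≤ c) (hn : 2 ≤ n) (ht : 1 ≤ t) (hs : 0 < s)
    (e0 : t * (Real.exp (m * t) + c) = n) (e1 : s * (Real.exp (m * s) + c) = n + 1)
    (hL1 : 1 ≤ L) (hLc : 2 * c ≤ L) (hL3 : L ^ 3 ≤ n) (htL : t ≤ L)
    (hLt : L ≤ 2 * (m + 1) * t) :
    |s - t - (1 / (m * n) - 1 / (m ^ 2 * n * t))| ≤ (56 + 4 * c) * (1 / (n * L ^ 2)) := by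
  have hn0 : 0 < n := by linarith
  have ht0 : 0 < t := by linarith
  have hm0 : 0 < m := by linarith
  have hL0 : 0 < L := by linarith
  have hts : t < s := by
    by_contra h
    push Not at h
    have h1 : Real.exp (m * s) ≤ Real.exp (m * t) := Real.exp_le_exp.2 (by gcongr)
    have h2 : s * (Real.exp (m * s) + c) ≤ t * (Real.exp (m * t) + c) := by
      have := Real.exp_pos (m * s)
      gcongr
    linarith
  obtain ⟨d, hd⟩ : ∃ d, d = s - t := ⟨_, rfl⟩
  have hd0 : 0 < d := by linarith
  have hsd : s = t + d := by linarith
  obtain ⟨E, hE⟩ : ∃ E, E = Real.exp (m * t) := ⟨_, rfl⟩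
  have hE0 : 0 < E := hE ▸ Real.exp_pos _
  obtain ⟨G, hG⟩ : ∃ G, G = Real.exp (m * d) := ⟨_, rfl⟩
  have hEG : Real.exp (m * s) = E * G := by rw [hsd, mul_add, Real.exp_add, hE, hG]
  rw [hEG, hsd] at e1
  rw [← hE] at e0
  have key : d * (E * G + c) + t * E * (G - 1) = 1 := by linarith
  have hG1 : 1 + m * d ≤ G := by rw [hG]; linarith [Real.add_one_le_exp (m * d)]
  obtain ⟨u, hu⟩ : ∃ u, u = 1 / (m * t) := ⟨_, rfl⟩
  obtain ⟨v, hv⟩ : ∃ v, v = c * t / n := ⟨_, rfl⟩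
  obtain ⟨x, hx⟩ : ∃ x, x = m * n * d := ⟨_, rfl⟩
  have hu0 : 0 < u := by rw [hu]; positivity
  have hv0 : 0 ≤ v := by rw [hv]; positivity
  have hx0 : 0 < x := by rw [hx]; positivity
  have hu1 : u ≤ 1 := by
    rw [hu, div_le_one (by positivity)]; nlinarith
  have hL2n : L ^ 2 ≤ n := by nlinarith [sq_nonneg L]
  have hvL : v ≤ c * (1 / L ^ 2) := by
    rw [hv, mul_one_div, div_le_div_iff₀ hn0 (by positivity)]
    have : t * L ^ 2 ≤ n := by nlinarith [sq_nonneg L]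
    nlinarith
  have hvh : v ≤ 1 / 2 := by
    refine hvL.trans ?_
    rw [mul_one_div, div_le_div_iff₀ (by positivity) (by norm_num)]
    nlinarith
  have hxD : x * (1 + u - v) = d * (E * (1 + m * t) + c) := by
    have : x * (1 + u - v) = d * (m * n + n / t - c * m * t) := by
      rw [hx, hu, hv]; field_simp
    rw [this]
    congr 1
    rw [← e0]; field_simp; ring
  have hup : x * (1 + u - v) ≤ 1 := by
    rw [hxD]
    have a1 : d * E * 1 ≤ d * E * G := by
      apply mul_le_mul_of_nonneg_left _ (by positivity)
      nlinarith [mul_pos hm0 hd0]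
    have a2 : t * E * (m * d) ≤ t * E * (G - 1) := by
      apply mul_le_mul_of_nonneg_left _ (by positivity)
      linarith
    nlinarith
  have hx2 : x ≤ 2 := by
    have : x * (1 / 2) ≤ x * (1 + u - v) := mul_le_mul_of_nonneg_left (by linarith) hx0.le
    linarith
  have hmd : m * d ≤ 1 := by
    have : (m * d) * n ≤ 2 := by linarith
    nlinarith [mul_pos hm0 hd0]
  have hG2 : G ≤ 1 + m * d + (m * d) ^ 2 := by
    have := Real.abs_exp_sub_one_sub_id_le (x := m * d) (by rw [abs_of_pos (by positivity)]; exact hmd)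
    rw [← hG] at this
    linarith [le_abs_self (G - 1 - m * d)]
  have hG3 : G ≤ 1 + 2 * (m * d) := by nlinarith [mul_pos hm0 hd0]
  have hEt : t * E ≤ n := by nlinarith [mul_nonneg ht0.le hc]
  have hEn : E ≤ n := by nlinarith
  obtain ⟨e, he⟩ : ∃ e, e = 1 - x * (1 + u - v) := ⟨_, rfl⟩
  have he0 : 0 ≤ e := by linarith
  have heub : e ≤ 12 / n := by
    have b1 : d * E * G ≤ d * E * (1 + 2 * (m * d)) :=
      mul_le_mul_of_nonneg_left hG3 (by positivity)
    have b2 : t * E * (G - 1) ≤ t * E * (m * d + (m * d) ^ 2) :=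
      mul_le_mul_of_nonneg_left (by linarith) (by positivity)
    have b3 : e ≤ E * (2 * m * d ^ 2) + t * E * (m * d) ^ 2 := by
      rw [he, hxD]; nlinarith
    have b4 : E * (2 * m * d ^ 2) ≤ n * (2 * m ^ 2 * d ^ 2) := by
      apply mul_le_mul hEn _ (by positivity) hn0.le
      have : m ≤ m ^ 2 := by nlinarith
      gcongr
    have b5 : t * E * (m * d) ^ 2 ≤ n * (m * d) ^ 2 := by gcongr
    rw [le_div_iff₀ hn0]
    have b6 : e ≤ 3 * n * (m * d) ^ 2 := by nlinarith
    have b7 : x ^ 2 ≤ 4 := by nlinarith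
    have b8 : 3 * n * (m * d) ^ 2 * n = 3 * x ^ 2 := by rw [hx]; ring
    nlinarith
  have heL : e ≤ 12 * (1 / L ^ 2) := by
    refine heub.trans ?_
    rw [mul_one_div]
    gcongr
  have huL : u ≤ 4 / L := by
    rw [hu, div_le_div_iff₀ (by positivity) hL0]
    nlinarith
  have huL2 : u ^ 2 ≤ 16 * (1 / L ^ 2) := by
    have : u ^ 2 ≤ (4 / L) ^ 2 := by gcongr
    refine this.trans (le_of_eq ?_)
    rw [div_pow]; ring
  have hid : x - 1 + u = -e + u * (e + x * u - x * v) + x * v := by rw [he]; ring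
  have hxv : x * v ≤ 2 * v := by gcongr
  have hxv0 : 0 ≤ x * v := by positivity
  have hxu : x * u ^ 2 ≤ 2 * u ^ 2 := by gcongr
  have hue : u * e ≤ e := by nlinarith
  have hue0 : 0 ≤ u * e := by positivity
  have huxv : u * (x * v) ≤ x * v := by nlinarith
  have huxv0 : 0 ≤ u * (x * v) := by positivity
  have hxu0 : 0 ≤ x * u ^ 2 := by positivity
  have hiL : 0 < 1 / L ^ 2 := by positivity
  have hmain : |x - 1 + u| ≤ (56 + 4 * c) * (1 / L ^ 2) := by
    have hid' : x - 1 + u = -e + u * e + x * u ^ 2 - u * (x * v) + x * v := by rw [hid]; ring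
    have hcL : 0 ≤ c * (1 / L ^ 2) := by positivity
    rw [hid', abs_le]
    constructor <;> linarith
  have hfin : s - t - (1 / (m * n) - 1 / (m ^ 2 * n * t)) = (x - 1 + u) * (1 / (m * n)) := by
    rw [← hd, hx, hu]; field_simp; ring
  rw [hfin, abs_mul, abs_of_pos (show 0 < 1 / (m * n) by positivity)]
  have h1 : 1 / (m * n) ≤ 1 / n := by
    apply one_div_le_one_div_of_le hn0; nlinarith
  calc |x - 1 + u| * (1 / (m * n)) ≤ ((56 + 4 * c) * (1 / L ^ 2)) * (1 / n) := by gcongr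
    _ = _ := by field_simp

/-- If `t i` is the unique positive solution of `t·(e^{m·t} + c) = n + i`, then
`t_1 − t_0 = 1/(m·n) − 1/(m²·n·t_0) + O(1/(n·log² n))` as `n → ∞`. -/
theorem stmt_11 (m c : ℕ) (hm : 0 < m) (t0 t1 t2 : ℕ → ℝ)
    (ht0 : ∀ n : ℕ, 2 ≤ n → 0 < t0 n ∧ t0 n * (Real.exp (m * t0 n) + c) = n)
    (ht1 : ∀ n : ℕ, 2 ≤ n → 0 < t1 n ∧ t1 n * (Real.exp (m * t1 n) + c) = n + 1)
    (ht2 : ∀ n : ℕ, 2 ≤ n → 0 < t2 n ∧ t2 n * (Real.exp (m * t2 n) + c) = n + 2) :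
    (fun n : ℕ => t1 n - t0 n - (1 / (m * n) - 1 / ((m : ℝ) ^ 2 * n * t0 n)))
      =O[atTop] (fun n : ℕ => 1 / (n * (Real.log n) ^ 2)) := by
  apply Asymptotics.IsBigO.of_bound (56 + 4 * (c : ℝ))
  have hlog : Tendsto (fun n : ℕ => Real.log n) atTop atTop :=
    Real.tendsto_log_atTop.comp tendsto_natCast_atTop_atTop
  have hpow : ∀ᶠ n : ℕ in atTop, Real.log n ^ 3 ≤ n := by
    have h := (Real.isLittleO_pow_log_id_atTop (n := 3)).bound (show (0 : ℝ) < 1 by norm_num)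
    have h2 := tendsto_natCast_atTop_atTop (R := ℝ) |>.eventually h
    filter_upwards [h2] with n hn
    simp only [id, one_mul, Real.norm_eq_abs, Nat.abs_cast] at hn
    exact (le_abs_self _).trans hn
  filter_upwards [eventually_ge_atTop 2, hpow, hlog.eventually_ge_atTop 1,
    hlog.eventually_ge_atTop (2 * c), hlog.eventually_ge_atTop (2 * Real.log (1 + c)),
    hlog.eventually_ge_atTop (2 * ((m : ℝ) + 1))] with n hn hL3 hL1 hLc hLl hLm
  obtain ⟨hp0, e0⟩ := ht0 n hn
  obtain ⟨hp1, e1⟩ := ht1 n hn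
  have hm1 : (1 : ℝ) ≤ m := by exact_mod_cast hm
  have hn2 : (2 : ℝ) ≤ n := by exact_mod_cast hn
  have hn0 : (0 : ℝ) < n := by linarith
  have hc0 : (0 : ℝ) ≤ c := Nat.cast_nonneg c
  have hE1 : 1 ≤ Real.exp (m * t0 n) := Real.one_le_exp (by positivity)
  have hlow : Real.log n ≤ 2 * ((m : ℝ) + 1) * t0 n := by
    have h1 : (n : ℝ) ≤ (1 + c) * Real.exp ((m + 1) * t0 n) := by
      have h2 : t0 n ≤ Real.exp (t0 n) := by linarith [Real.add_one_le_exp (t0 n)]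
      have h3 : Real.exp (m * t0 n) + c ≤ (1 + c) * Real.exp (m * t0 n) := by nlinarith
      calc (n : ℝ) = t0 n * (Real.exp (m * t0 n) + c) := e0.symm
        _ ≤ Real.exp (t0 n) * ((1 + c) * Real.exp (m * t0 n)) := by gcongr
        _ = _ := by rw [add_mul (m : ℝ), one_mul, Real.exp_add]; ring
    have h4 := Real.log_le_log hn0 h1
    rw [Real.log_mul (by positivity) (by positivity), Real.log_exp] at h4
    linarith
  have ht1 : 1 ≤ t0 n := by
    by_contra h
    push Not at h
    nlinarith
  have hupp : t0 n ≤ Real.log n := by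
    rw [Real.le_log_iff_exp_le hn0]
    have h1 : Real.exp (t0 n) ≤ Real.exp (m * t0 n) := Real.exp_le_exp.2 (by nlinarith)
    nlinarith
  have := core_est m c n (t0 n) (t1 n) (Real.log n) hm1 hc0 hn2 ht1 hp1 e0 e1 hL1 hLc hL3 hupp hlow
  rw [Real.norm_eq_abs, Real.norm_eq_abs, abs_of_nonneg (a := 1 / ((n : ℝ) * _)) (by positivity)]
  exact this
end

section
/- Let f(x) = x·(e^{m·x} + c), and for each i ∈ {0,1,2} let t_i = t_i(n) be the unique positive real number with f(t_i) = n + i. Then as n → ∞, t_2 − t_1 = 1/(m·n) − 1/(m²·n·t_0) + O(1/(n·log² n)). -/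
open Filter

lemma aux_lt (m c : ℕ) {x y : ℝ} (hx : 0 < x) (hy : 0 < y)
    (h : x * (Real.exp (m * x) + c) < y * (Real.exp (m * y) + c)) : x < y := by
  by_contra hle
  push Not at hle
  have h1 : Real.exp (m * y) ≤ Real.exp (m * x) := by gcongr
  have h2 : y * (Real.exp (m * y) + c) ≤ x * (Real.exp (m * x) + c) := by gcongr
  linarith

lemma aux_gap (m c : ℕ) {x y : ℝ} (hx : 0 < x) (hxy : x ≤ y)
    (h : y * (Real.exp (m * y) + c) ≤ x * (Real.exp (m * x) + c) + 2) : y ≤ x + 2 := by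
  have h1 : Real.exp (m * x) ≤ Real.exp (m * y) := by gcongr
  have h2 : y * (Real.exp (m * x) + c) ≤ y * (Real.exp (m * y) + c) := by
    have : 0 < y := by linarith
    gcongr
  have h3 : 1 ≤ Real.exp (m * x) + c := by
    have : 1 ≤ Real.exp (m * x) := Real.one_le_exp (by positivity)
    have : (0 : ℝ) ≤ c := by positivity
    linarith
  nlinarith

lemma aux_mvt (m c : ℕ) {x y : ℝ} (hxy : x < y) :
    ∃ s, x < s ∧ s < y ∧
      (y - x) * (Real.exp (m * s) + c + s * (Real.exp (m * s) * m)) =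
        y * (Real.exp (m * y) + c) - x * (Real.exp (m * x) + c) := by
  have hd : ∀ s : ℝ, HasDerivAt (fun s : ℝ => s * (Real.exp (m * s) + c))
      (Real.exp (m * s) + c + s * (Real.exp (m * s) * m)) s := by
    intro s
    have h1 : HasDerivAt (fun s : ℝ => (m : ℝ) * s) m s := by
      simpa using (hasDerivAt_id s).const_mul (m : ℝ)
    have h2 := (hasDerivAt_id s).mul (h1.exp.add_const (c : ℝ))
    exact h2.congr_deriv (by simp)
  obtain ⟨s, hs, he⟩ := exists_hasDerivAt_eq_slope _ _ hxy
    (fun z _ => (hd z).continuousAt.continuousWithinAt) (fun z _ => hd z)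
  refine ⟨s, hs.1, hs.2, ?_⟩
  rw [he]
  have : y - x ≠ 0 := by linarith
  field_simp

/-- The main estimate. -/
lemma aux_main (m c n s t F E d : ℝ) (hm : 1 ≤ m) (hc : 0 ≤ c) (hn : 2 ≤ n) (ht : 1 ≤ t)
    (hts : t ≤ s) (hst : s ≤ t + 2) (hF : F = s * (E + c)) (hFn : n ≤ F) (hFn2 : F ≤ n + 2)
    (hE : s ^ 3 / 6 ≤ E) (hd : d * (E + c + s * (E * m)) = 1) :
    |d - (1 / (m * n) - 1 / (m ^ 2 * n * t))| ≤ (12 * (2 + c) + 3) * (1 / (n * t ^ 2)) := by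
  have hs : 1 ≤ s := by linarith
  have hs0 : 0 < s := by linarith
  have ht0 : 0 < t := by linarith
  have hm0 : 0 < m := by linarith
  have hn0 : 0 < n := by linarith
  have hE0 : 0 < E := by
    have : 0 < s ^ 3 / 6 := by positivity
    linarith
  have hs4 : s ^ 4 ≤ 12 * n := by
    have h1 : s * (s ^ 3 / 6) ≤ s * E := by gcongr
    have h2 : s * E ≤ F := by rw [hF]; nlinarith
    nlinarith
  have hs3 : s ^ 3 ≤ s ^ 4 := pow_le_pow_right₀ hs (by norm_num)
  set G := E + c + s * (E * m) with hG
  have hG0 : 0 < G := by positivity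
  have hdG : d = 1 / G := by field_simp; linarith
  have hsG : s * G = F * (1 + m * s) - m * c * s ^ 2 := by rw [hG, hF]; ring
  have hnG : n ≤ s * G := by
    have : s * G = F + m * s * (s * E) := by rw [hG, hF]; ring
    have : 0 ≤ m * s * (s * E) := by positivity
    linarith
  have hts2 : 1 / (n * s ^ 2) ≤ 1 / (n * t ^ 2) := by gcongr
  -- first piece
  have A1 : |d - s / (n * (1 + m * s))| ≤ 12 * (2 + c) * (1 / (n * t ^ 2)) := by
    have e : d - s / (n * (1 + m * s)) =
        s * (n * (1 + m * s) - s * G) / ((s * G) * (n * (1 + m * s))) := by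
      rw [hdG]; field_simp
    have hnum : |s * (n * (1 + m * s) - s * G)| ≤ (1 + m * s) * (2 * s + c * s ^ 2) := by
      have e2 : s * (n * (1 + m * s) - s * G)
          = - ((F - n) * (s * (1 + m * s))) + m * c * s ^ 3 := by rw [hsG]; ring
      have p1 : 0 ≤ (F - n) * (s * (1 + m * s)) := mul_nonneg (by linarith) (by positivity)
      have p2 : (F - n) * (s * (1 + m * s)) ≤ 2 * (s * (1 + m * s)) := by
        gcongr; linarith
      have p3 : 0 ≤ m * c * s ^ 3 := by positivity
      have p4 : 0 ≤ c * s ^ 2 := by positivity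
      have p5 : 0 ≤ s * (1 + m * s) := by positivity
      rw [e2, abs_le]
      constructor <;> nlinarith
    rw [e, abs_div, abs_of_pos (a := (s * G) * (n * (1 + m * s))) (by positivity)]
    calc _ ≤ (1 + m * s) * (2 * s + c * s ^ 2) / (n * (n * (1 + m * s))) := by gcongr
      _ = (2 * s + c * s ^ 2) * s ^ 2 / n * (1 / (n * s ^ 2)) := by field_simp
      _ ≤ 12 * (2 + c) * (1 / (n * s ^ 2)) := by
        gcongr
        rw [div_le_iff₀ hn0]
        nlinarith
      _ ≤ _ := by gcongr
  have A2 : |s / (n * (1 + m * s)) - (1 / (m * n) - 1 / (m ^ 2 * n * s))| ≤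
      1 / (n * t ^ 2) := by
    have e : s / (n * (1 + m * s)) - (1 / (m * n) - 1 / (m ^ 2 * n * s)) =
        1 / (n * (m ^ 2 * s * (1 + m * s))) := by
      field_simp; ring
    rw [e, abs_of_pos (by positivity)]
    refine le_trans ?_ hts2
    gcongr
    have : 1 ≤ m ^ 2 := one_le_pow₀ hm
    have : s ≤ 1 + m * s := by nlinarith
    calc s ^ 2 = 1 * s * s := by ring
      _ ≤ _ := by gcongr
  have A3 : |(1 / (m * n) - 1 / (m ^ 2 * n * s)) - (1 / (m * n) - 1 / (m ^ 2 * n * t))| ≤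
      2 * (1 / (n * t ^ 2)) := by
    have e : (1 / (m * n) - 1 / (m ^ 2 * n * s)) - (1 / (m * n) - 1 / (m ^ 2 * n * t)) =
        (s - t) * (1 / (n * (m ^ 2 * (t * s)))) := by
      field_simp; ring
    have h0 : 0 ≤ s - t := by linarith
    rw [e, abs_of_nonneg (by positivity)]
    have : 1 ≤ m ^ 2 := one_le_pow₀ hm
    gcongr
    · linarith
    · calc t ^ 2 = 1 * (t * t) := by ring
        _ ≤ _ := by gcongr
  rw [abs_le] at *
  constructor <;> linarith [A1.1, A1.2, A2.1, A2.2, A3.1, A3.2]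

lemma aux_log (m c : ℕ) {n t : ℝ} (hn : 0 < n) (ht : 1 ≤ t)
    (h : t * (Real.exp (m * t) + c) = n) : Real.log n ≤ (1 + m + c) * t := by
  have hc : (0 : ℝ) ≤ c := by positivity
  rw [Real.log_le_iff_le_exp hn, ← h]
  have e : Real.exp ((1 + m + c) * t) =
      Real.exp t * (Real.exp (m * t) * Real.exp (c * t)) := by
    rw [← Real.exp_add, ← Real.exp_add]; ring_nf
  rw [e]
  have h1 : t ≤ Real.exp t := by linarith [Real.add_one_le_exp t]
  have h2 : 1 ≤ Real.exp (m * t) := Real.one_le_exp (by positivity)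
  have h3 : 1 + (c : ℝ) ≤ Real.exp (c * t) := by
    have := Real.add_one_le_exp ((c : ℝ) * t)
    nlinarith
  gcongr
  nlinarith


/-- If `t i` is the unique positive solution of `t·(e^{m·t} + c) = n + i`, then
`t_2 − t_1 = 1/(m·n) − 1/(m²·n·t_0) + O(1/(n·log² n))` as `n → ∞`. -/
theorem stmt_12 (m c : ℕ) (hm : 0 < m) (t0 t1 t2 : ℕ → ℝ)
    (ht0 : ∀ n : ℕ, 2 ≤ n → 0 < t0 n ∧ t0 n * (Real.exp (m * t0 n) + c) = n)
    (ht1 : ∀ n : ℕ, 2 ≤ n → 0 < t1 n ∧ t1 n * (Real.exp (m * t1 n) + c) = n + 1)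
    (ht2 : ∀ n : ℕ, 2 ≤ n → 0 < t2 n ∧ t2 n * (Real.exp (m * t2 n) + c) = n + 2) :
    (fun n : ℕ => t2 n - t1 n - (1 / (m * n) - 1 / ((m : ℝ) ^ 2 * n * t0 n)))
      =O[atTop] (fun n : ℕ => 1 / (n * (Real.log n) ^ 2)) := by
  have hm1 : (1 : ℝ) ≤ m := by exact_mod_cast hm
  have hc0 : (0 : ℝ) ≤ c := by positivity
  refine Asymptotics.IsBigO.of_bound ((12 * (2 + c) + 3) * (1 + m + c) ^ 2) ?_
  filter_upwards [eventually_ge_atTop 2,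
    tendsto_natCast_atTop_atTop.eventually_gt_atTop (Real.exp m + c)] with n hn hbig
  obtain ⟨p0, e0⟩ := ht0 n hn
  obtain ⟨p1, e1⟩ := ht1 n hn
  obtain ⟨p2, e2⟩ := ht2 n hn
  have hnR : (2 : ℝ) ≤ n := by exact_mod_cast hn
  have h01 : t0 n < t1 n := aux_lt m c p0 p1 (by linarith)
  have h12 : t1 n < t2 n := aux_lt m c p1 p2 (by linarith)
  have hg : t2 n ≤ t0 n + 2 := aux_gap m c p0 (by linarith) (by linarith)
  have ht : 1 ≤ t0 n := by
    refine (aux_lt m c one_pos p0 ?_).le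
    rw [e0]; simpa using hbig
  obtain ⟨s, hs1, hs2, hs⟩ := aux_mvt m c h12
  have hs0 : 0 < s := by linarith
  have mono : ∀ x y : ℝ, 0 < x → x ≤ y →
      x * (Real.exp (m * x) + c) ≤ y * (Real.exp (m * y) + c) := by
    intro x y hx hxy
    have h1 : Real.exp (m * x) ≤ Real.exp (m * y) := by gcongr
    have : 0 < y := by linarith
    gcongr
  have f1 := mono _ _ p1 hs1.le
  have f2 := mono _ _ hs0 hs2.le
  have hE : s ^ 3 / 6 ≤ Real.exp (m * s) := by
    have h1 := Real.pow_div_factorial_le_exp s hs0.le 3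
    have h2 : Real.exp s ≤ Real.exp (m * s) := by
      apply Real.exp_le_exp.2
      nlinarith
    have h3 : ((Nat.factorial 3 : ℕ) : ℝ) = 6 := by norm_num [Nat.factorial]
    rw [h3] at h1
    linarith
  have key := aux_main m c n s (t0 n) _ (Real.exp (m * s)) (t2 n - t1 n) hm1 hc0 hnR ht
    (by linarith) (by linarith) rfl (by linarith) (by linarith) hE (by linarith)
  have hlog := aux_log m c (by linarith) ht e0
  have hlog0 : 0 < Real.log n := Real.log_pos (by linarith)
  have hn0 : (0 : ℝ) < n := by linarith
  rw [Real.norm_eq_abs, Real.norm_eq_abs, abs_of_pos (a := 1 / ((n : ℝ) * Real.log n ^ 2)) (by positivity)]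
  refine key.trans ?_
  rw [mul_assoc]
  gcongr
  rw [mul_one_div, div_le_div_iff₀ (by positivity) (by positivity)]
  have : Real.log n ^ 2 ≤ ((1 + m + c) * t0 n) ^ 2 := by gcongr
  nlinarith
end

section
/- Let f(x) = x·(e^{m·x} + c), and for each i ∈ {0,1,2} let t_i = t_i(n) be the unique positive real number with f(t_i) = n + i. Then as n → ∞, 2·t_1 − t_0 − t_2 = 1/(m·n²) + O(1/(n²·log n)). -/
open Filter

/-- `f = x + O(u)`. -/
def Cg (u f : ℕ → ℝ) (x : ℝ) : Prop := (fun n => f n - x) =O[atTop] u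

lemma Cg.add {u f g : ℕ → ℝ} {x y : ℝ} (hf : Cg u f x) (hg : Cg u g y) :
    Cg u (fun n => f n + g n) (x + y) := by
  unfold Cg at *
  refine (hf.add hg).congr_left (fun n => by ring)

lemma Cg.bdd {u f : ℕ → ℝ} {x : ℝ} (hu : Tendsto u atTop (nhds 0)) (hf : Cg u f x) :
    f =O[atTop] (fun _ => (1 : ℝ)) := by
  unfold Cg at *
  have h1 : u =O[atTop] (fun _ => (1 : ℝ)) := hu.isBigO_one ℝ
  have h2 : (fun _ : ℕ => x) =O[atTop] (fun _ => (1 : ℝ)) :=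
    Asymptotics.isBigO_const_const _ one_ne_zero _
  refine ((hf.trans h1).add h2).congr_left (fun n => by ring)

lemma Cg.const (u : ℕ → ℝ) (x : ℝ) : Cg u (fun _ => x) x := by
  unfold Cg
  simpa using Asymptotics.isBigO_zero u atTop

lemma Cg.zero {u f : ℕ → ℝ} (hf : f =O[atTop] u) : Cg u f 0 := by
  unfold Cg
  simpa using hf

lemma bdd_mul {u f g : ℕ → ℝ} (hf : f =O[atTop] (fun _ => (1 : ℝ))) (hg : g =O[atTop] u) :
    (fun n => f n * g n) =O[atTop] u := by
  simpa using hf.mul hg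

lemma Cg.mul {u f g : ℕ → ℝ} {x y : ℝ} (hu : Tendsto u atTop (nhds 0))
    (hf : Cg u f x) (hg : Cg u g y) :
    Cg u (fun n => f n * g n) (x * y) := by
  have hb := hf.bdd hu
  unfold Cg at *
  have h1 := bdd_mul hb hg
  have h2 := hf.const_mul_left y
  refine (h1.add h2).congr_left (fun n => by ring)

lemma Cg.tendsto {u f : ℕ → ℝ} {x : ℝ} (hu : Tendsto u atTop (nhds 0)) (hf : Cg u f x) :
    Tendsto f atTop (nhds x) := by
  have := (Asymptotics.IsBigO.trans_tendsto hf hu).add_const x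
  simpa using this

lemma Cg.inv {u f : ℕ → ℝ} {x : ℝ} (hu : Tendsto u atTop (nhds 0)) (hx : x ≠ 0)
    (hf : Cg u f x) : Cg u (fun n => (f n)⁻¹) x⁻¹ := by
  have ht := hf.tendsto hu
  have hb : (fun n => (f n)⁻¹) =O[atTop] (fun _ => (1 : ℝ)) := (ht.inv₀ hx).isBigO_one ℝ
  have hne : ∀ᶠ n in atTop, f n ≠ 0 := ht.eventually_ne hx
  unfold Cg at *
  have h := (bdd_mul hb hf).const_mul_left (-x⁻¹)
  refine h.congr' ?_ EventuallyEq.rfl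
  filter_upwards [hne] with n hn
  field_simp
  ring

lemma Cg.congr {u f g : ℕ → ℝ} {x y : ℝ} (hf : Cg u f x) (h : ∀ᶠ n in atTop, f n = g n)
    (hxy : x = y) : Cg u g y := by
  subst hxy
  unfold Cg at *
  refine hf.congr' ?_ EventuallyEq.rfl
  filter_upwards [h] with n hn
  rw [hn]

lemma exp_third (y : ℝ) (hy : |y| ≤ 1) : |Real.exp y - 1 - y - y ^ 2 / 2| ≤ |y| ^ 3 := by
  have h := Real.exp_bound hy (n := 3) (by norm_num)
  simp [Finset.sum_range_succ, Nat.factorial] at h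
  have h2 : Real.exp y - 1 - y - y ^ 2 / 2 = Real.exp y - (1 + y + y ^ 2 / 2) := by ring
  rw [h2]
  have : 0 ≤ |y| ^ 3 := by positivity
  nlinarith

lemma step (m c s : ℝ) (hm : 0 < m) (u t N x : ℕ → ℝ) (hu : Tendsto u atTop (nhds 0))
    (hNpos : ∀ᶠ n in atTop, 0 < N n)
    (hN : (fun n => (N n)⁻¹) =O[atTop] u)
    (htE : Cg u (fun n => t n * Real.exp (m * t n) / N n) 1)
    (hE : (fun n => Real.exp (m * t n) / N n) =O[atTop] u)
    (hX : (fun n => x n * N n) =O[atTop] (fun _ => (1 : ℝ)))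
    (heq : ∀ᶠ n in atTop, (t n + x n) * (Real.exp (m * (t n + x n)) + c)
      - t n * (Real.exp (m * t n) + c) = s) :
    Cg u (fun n => (Real.exp (m * t n) * (1 + m * t n) + c) / N n) m ∧
    Cg u (fun n => Real.exp (m * t n) * (m + m ^ 2 * t n / 2) / N n) (m ^ 2 / 2) ∧
    Cg u (fun n => x n * N n) (s / m) ∧
    ∃ ρ : ℕ → ℝ, ρ =O[atTop] u ∧ ∀ᶠ n in atTop,
      (x n * N n) * ((Real.exp (m * t n) * (1 + m * t n) + c) / N n) +
      ((x n * N n) ^ 2 * (Real.exp (m * t n) * (m + m ^ 2 * t n / 2) / N n) + ρ n) * (N n)⁻¹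
        = s := by
  have hu1 : u =O[atTop] (fun _ => (1 : ℝ)) := hu.isBigO_one ℝ
  have hP : Cg u (fun n => (Real.exp (m * t n) * (1 + m * t n) + c) / N n) m := by
    refine (((Cg.zero hE).add ((Cg.const u m).mul hu htE)).add
      ((Cg.const u c).mul hu (Cg.zero hN))).congr (Eventually.of_forall fun n => ?_) (by ring)
    simp only [div_eq_mul_inv]; ring
  have hQ : Cg u (fun n => Real.exp (m * t n) * (m + m ^ 2 * t n / 2) / N n) (m ^ 2 / 2) := by
    refine (((Cg.const u m).mul hu (Cg.zero hE)).add ((Cg.const u (m ^ 2 / 2)).mul hu htE)).congr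
      (Eventually.of_forall fun n => ?_) (by ring)
    simp only [div_eq_mul_inv]; ring
  -- remainder of the exponential
  have hx0 : Tendsto x atTop (nhds 0) := by
    have h := (bdd_mul hX hN).trans_tendsto hu
    refine h.congr' ?_
    filter_upwards [hNpos] with n hn
    field_simp
  have hS : (fun n => (Real.exp (m * x n) - 1 - m * x n - (m * x n) ^ 2 / 2) * (N n) ^ 3)
      =O[atTop] (fun _ => (1 : ℝ)) := by
    have h3 : (fun n => m ^ 3 * ((x n * N n) ^ 3)) =O[atTop] (fun _ => (1 : ℝ)) := by
      have h := (hX.pow 3).const_mul_left (m ^ 3)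
      simp only [one_pow] at h
      exact h
    refine Asymptotics.IsBigO.trans (Asymptotics.IsBigO.of_bound 1 ?_) h3
    have hsm : ∀ᶠ n in atTop, |m * x n| < 1 := by
      have : Tendsto (fun n => |m * x n|) atTop (nhds 0) := by
        simpa using (hx0.const_mul m).abs
      exact this.eventually_lt_const one_pos
    filter_upwards [hsm] with n hn
    have h := exp_third _ hn.le
    rw [Real.norm_eq_abs, Real.norm_eq_abs, abs_mul, one_mul]
    calc _ ≤ |m * x n| ^ 3 * |N n ^ 3| := by gcongr
      _ = _ := by rw [← abs_pow, ← abs_mul]; congr 1; ring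
  have hE1 := hE.trans hu1
  have hN1 := hN.trans hu1
  have htE1 := htE.bdd hu
  refine ⟨hP, hQ, ?_⟩
  have key : ∃ ρ : ℕ → ℝ, ρ =O[atTop] u ∧ ∀ᶠ n in atTop,
      (x n * N n) * ((Real.exp (m * t n) * (1 + m * t n) + c) / N n) +
      ((x n * N n) ^ 2 * (Real.exp (m * t n) * (m + m ^ 2 * t n / 2) / N n) + ρ n) * (N n)⁻¹
        = s := by
    refine ⟨fun n => m ^ 2 / 2 * ((x n * N n) ^ 3 * (Real.exp (m * t n) / N n * (N n)⁻¹)) +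
      ((Real.exp (m * x n) - 1 - m * x n - (m * x n) ^ 2 / 2) * (N n) ^ 3) *
        ((t n * Real.exp (m * t n) / N n) * (N n)⁻¹ +
        (x n * N n) * (Real.exp (m * t n) / N n * ((N n)⁻¹ * (N n)⁻¹))), ?_, ?_⟩
    · have hX3 : (fun n => (x n * N n) ^ 3) =O[atTop] (fun _ => (1 : ℝ)) := by
        simpa using hX.pow 3
      exact ((bdd_mul hX3 (bdd_mul hE1 hN)).const_mul_left _).add
        (bdd_mul hS ((bdd_mul htE1 hN).add (bdd_mul hX (bdd_mul hE1 (bdd_mul hN1 hN)))))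
    · filter_upwards [heq, hNpos] with n hn hp
      rw [← hn, mul_add m, Real.exp_add]
      field_simp
      ring
  refine ⟨?_, key⟩
  obtain ⟨ρ, hρ, hs⟩ := key
  have hX2 : (fun n => (x n * N n) ^ 2) =O[atTop] (fun _ => (1 : ℝ)) := by
    simpa using hX.pow 2
  have hZ := bdd_mul ((bdd_mul hX2 (hQ.bdd hu)).add (hρ.trans hu1)) hN
  have hA := ((Cg.const u s).add ((Cg.const u (-1)).mul hu (Cg.zero hZ))).mul hu (hP.inv hu hm.ne')
  refine hA.congr ?_ (by ring)
  have hPne := (hP.tendsto hu).eventually_ne hm.ne'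
  filter_upwards [hs, hPne] with n h1 h2
  generalize (Real.exp (m * t n) * (1 + m * t n) + c) / N n = P at *
  rw [← div_eq_mul_inv, div_eq_iff h2]
  linarith

/-- Strict monotonicity, in the form needed. -/
lemma mono_aux (m c : ℝ) (hm : 0 < m) (hc : 0 ≤ c) (a b : ℝ) (ha : 0 < a)
    (h : a * (Real.exp (m * a) + c) ≤ b * (Real.exp (m * b) + c)) : a ≤ b := by
  by_contra hlt
  push Not at hlt
  have h1 : Real.exp (m * b) < Real.exp (m * a) :=
    Real.exp_lt_exp.mpr (by nlinarith)
  have h2 := Real.exp_pos (m * b)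
  nlinarith

lemma diff_aux (m c : ℝ) (hm : 0 < m) (hc : 0 ≤ c) (a b : ℝ) (ha : 0 < a)
    (hab : a ≤ b)
    (h : b * (Real.exp (m * b) + c) - a * (Real.exp (m * a) + c) = 1) :
    a * Real.exp (m * a) * m * (b - a) ≤ 1 := by
  have h1 : Real.exp (m * b) = Real.exp (m * a) * Real.exp (m * (b - a)) := by
    rw [← Real.exp_add]; ring_nf
  have h2 := Real.add_one_le_exp (m * (b - a))
  have h3 := Real.exp_pos (m * a)
  have h4 : Real.exp (m * a) * (m * (b - a) + 1) ≤ Real.exp (m * b) := by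
    rw [h1]; gcongr
  have h5 : 0 ≤ (b - a) * (Real.exp (m * b) + c) := by
    have := Real.exp_pos (m * b)
    exact mul_nonneg (by linarith) (by linarith)
  have h6 := mul_le_mul_of_nonneg_left h4 ha.le
  nlinarith

theorem stmt_13 (m c : ℕ) (hm : 0 < m) (t0 t1 t2 : ℕ → ℝ)
    (ht0 : ∀ n : ℕ, 2 ≤ n → 0 < t0 n ∧ t0 n * (Real.exp (m * t0 n) + c) = n)
    (ht1 : ∀ n : ℕ, 2 ≤ n → 0 < t1 n ∧ t1 n * (Real.exp (m * t1 n) + c) = n + 1)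
    (ht2 : ∀ n : ℕ, 2 ≤ n → 0 < t2 n ∧ t2 n * (Real.exp (m * t2 n) + c) = n + 2) :
    (fun n : ℕ => 2 * t1 n - t0 n - t2 n - 1 / (m * (n : ℝ) ^ 2))
      =O[atTop] (fun n : ℕ => 1 / ((n : ℝ) ^ 2 * Real.log n)) := by
  have hm' : (0 : ℝ) < m := by exact_mod_cast hm
  have hc' : (0 : ℝ) ≤ c := by positivity
  generalize (m : ℝ) = M at *
  generalize (c : ℝ) = C at *
  have ge2 : ∀ᶠ n : ℕ in atTop, 2 ≤ n := eventually_ge_atTop 2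
  have hlogN : Tendsto (fun n : ℕ => Real.log n) atTop atTop :=
    Real.tendsto_log_atTop.comp tendsto_natCast_atTop_atTop
  -- logarithmic lower bound for t1
  have hlog : ∀ n : ℕ, 2 ≤ n → Real.log n ≤ (M + 1) * t1 n + C := by
    intro n hn
    obtain ⟨hp, he⟩ := ht1 n hn
    have hn0 : (0 : ℝ) < n := by positivity
    have hE : 1 ≤ Real.exp (M * t1 n) := Real.one_le_exp (by positivity)
    have h1 : (n : ℝ) ≤ Real.exp (t1 n) * (Real.exp (M * t1 n) * Real.exp C) := by
      have e1 := Real.add_one_le_exp (t1 n)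
      have e2 := Real.add_one_le_exp C
      have e3 : Real.exp (M * t1 n) + C ≤ Real.exp (M * t1 n) * Real.exp C := by nlinarith
      have : t1 n * (Real.exp (M * t1 n) + C)
          ≤ Real.exp (t1 n) * (Real.exp (M * t1 n) * Real.exp C) := by
        apply mul_le_mul (by linarith) e3 (by linarith) (by positivity)
      linarith
    rw [← Real.exp_add, ← Real.exp_add] at h1
    have := Real.log_le_log hn0 h1
    rw [Real.log_exp] at this
    linarith
  have htop : Tendsto t1 atTop atTop := by
    have h1 : Tendsto (fun n : ℕ => (Real.log n + -C) / (M + 1)) atTop atTop :=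
      (tendsto_atTop_add_const_right _ _ hlogN).atTop_div_const (by linarith)
    refine tendsto_atTop_mono' _ ?_ h1
    filter_upwards [ge2] with n hn
    rw [div_le_iff₀ (by linarith)]
    linarith [hlog n hn]
  set u : ℕ → ℝ := fun n => (t1 n)⁻¹ with hudef
  have hu : Tendsto u atTop (nhds 0) := htop.inv_tendsto_atTop
  have hulog : u =O[atTop] (fun n : ℕ => (Real.log n)⁻¹) := by
    refine Asymptotics.IsBigO.of_bound (M + 1 + C) ?_
    filter_upwards [ge2, htop.eventually_ge_atTop 1, hlogN.eventually_gt_atTop 0] with n hn h1 h2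
    have h3 := hlog n hn
    rw [Real.norm_of_nonneg (by positivity), Real.norm_of_nonneg (by positivity)]
    simp only [hudef]
    rw [← div_eq_mul_inv, le_div_iff₀ h2, inv_mul_le_iff₀ (by linarith)]
    nlinarith
  let N : ℕ → ℝ := fun n => (n : ℝ) + 1
  have hNpos : ∀ᶠ n in atTop, 0 < N n := Eventually.of_forall fun n => by
    simp only [N]; positivity
  have hN : (fun n => (N n)⁻¹) =O[atTop] u := by
    refine Asymptotics.IsBigO.of_bound 1 ?_
    filter_upwards [ge2, hNpos] with n hn hp
    obtain ⟨h1, h2⟩ := ht1 n hn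
    have hE : 1 ≤ Real.exp (M * t1 n) := Real.one_le_exp (by positivity)
    rw [Real.norm_of_nonneg (by positivity), Real.norm_of_nonneg (by positivity), one_mul]
    apply inv_anti₀ h1
    simp only [N]; nlinarith
  have hE : (fun n => Real.exp (M * t1 n) / N n) =O[atTop] u := by
    refine Asymptotics.IsBigO.of_bound 1 ?_
    filter_upwards [ge2, hNpos] with n hn hp
    obtain ⟨h1, h2⟩ := ht1 n hn
    rw [Real.norm_of_nonneg (by positivity), Real.norm_of_nonneg (by positivity), one_mul]
    simp only [hudef]
    rw [div_le_iff₀ hp, ← div_eq_inv_mul, le_div_iff₀ h1]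
    simp only [N]; nlinarith
  have htN : (fun n => t1 n / N n) =O[atTop] u := by
    refine Asymptotics.IsBigO.of_bound (M⁻¹) ?_
    filter_upwards [ge2, hNpos] with n hn hp
    obtain ⟨h1, h2⟩ := ht1 n hn
    have e1 := Real.add_one_le_exp (M * t1 n)
    rw [Real.norm_of_nonneg (by positivity), Real.norm_of_nonneg (by positivity)]
    simp only [hudef]
    rw [div_le_iff₀ hp, ← mul_inv, ← div_eq_inv_mul, le_div_iff₀ (by positivity)]
    simp only [N]; nlinarith
  have htE : Cg u (fun n => t1 n * Real.exp (M * t1 n) / N n) 1 := by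
    refine ((Cg.const u 1).add ((Cg.const u (-C)).mul hu (Cg.zero htN))).congr ?_ (by ring)
    filter_upwards [ge2, hNpos] with n hn hp
    obtain ⟨h1, h2⟩ := ht1 n hn
    rw [eq_div_iff hp.ne']
    have h3 : t1 n / N n * N n = t1 n := div_mul_cancel₀ _ hp.ne'
    have h4 : N n = t1 n * (Real.exp (M * t1 n) + C) := h2.symm
    linear_combination h4 - C * h3
  have hnN : Cg u (fun n => (n : ℝ) / N n) 1 := by
    refine ((Cg.const u 1).add ((Cg.const u (-1)).mul hu (Cg.zero hN))).congr ?_ (by ring)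
    filter_upwards [hNpos] with n hp
    field_simp
    simp only [N]; ring
  -- first differences
  have hB : (fun n => (t2 n - t1 n) * N n) =O[atTop] (fun _ => (1 : ℝ)) := by
    refine Asymptotics.IsBigO.of_bound (2 / M) ?_
    filter_upwards [ge2, hNpos, (htE.tendsto hu).eventually_const_lt
      (show (1 / 2 : ℝ) < 1 by norm_num)] with n hn hp hh
    obtain ⟨h1, h2⟩ := ht1 n hn
    obtain ⟨h3, h4⟩ := ht2 n hn
    have hle := mono_aux M C hm' hc' (t1 n) (t2 n) h1 (by linarith)
    have hd := diff_aux M C hm' hc' (t1 n) (t2 n) h1 hle (by linarith)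
    rw [lt_div_iff₀ hp] at hh
    have h5 : 0 ≤ t2 n - t1 n := by linarith
    rw [Real.norm_of_nonneg (by positivity), norm_one, mul_one, le_div_iff₀ hm']
    have := mul_le_mul_of_nonneg_right hh.le (mul_nonneg hm'.le h5)
    nlinarith
  have hA : (fun n => (t0 n - t1 n) * N n) =O[atTop] (fun _ => (1 : ℝ)) := by
    refine Asymptotics.IsBigO.of_bound (2 / M) ?_
    have hlow := (hnN.add ((Cg.const u (-C)).mul hu (Cg.zero htN))).tendsto hu
    filter_upwards [ge2, hNpos, hlow.eventually_const_lt
      (show (1 / 2 : ℝ) < 1 + -C * 0 by norm_num)] with n hn hp hh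
    obtain ⟨h1, h2⟩ := ht1 n hn
    obtain ⟨h3, h4⟩ := ht0 n hn
    have hle := mono_aux M C hm' hc' (t0 n) (t1 n) h3 (by linarith)
    have hd := diff_aux M C hm' hc' (t0 n) (t1 n) h3 hle (by linarith)
    have hh2 : 1 / 2 * N n < n - C * t1 n := by
      have : (n : ℝ) / N n + -C * (t1 n / N n) = (n - C * t1 n) / N n := by ring
      rw [this, lt_div_iff₀ hp] at hh
      exact hh
    have hh3 : 1 / 2 * N n ≤ t0 n * Real.exp (M * t0 n) := by nlinarith
    have h5 : 0 ≤ t1 n - t0 n := by linarith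
    rw [norm_mul, Real.norm_of_nonneg hp.le, norm_sub_rev, Real.norm_of_nonneg h5,
      norm_one, mul_one, le_div_iff₀ hm']
    have := mul_le_mul_of_nonneg_right hh3 (mul_nonneg hm'.le h5)
    nlinarith
  obtain ⟨hP, hQ, hBc, ρ, hρ, hρe⟩ := step M C 1 hm' u t1 N (fun n => t2 n - t1 n) hu hNpos hN htE
    hE hB (by
      filter_upwards [ge2] with n hn
      rw [add_sub_cancel, (ht1 n hn).2, (ht2 n hn).2]; ring)
  obtain ⟨-, -, hAc, σ, hσ, hσe⟩ := step M C (-1) hm' u t1 N (fun n => t0 n - t1 n) hu hNpos hN htE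
    hE hA (by
      filter_upwards [ge2] with n hn
      rw [add_sub_cancel, (ht1 n hn).2, (ht0 n hn).2]; ring)
  have hmain : Cg u (fun n => (2 * t1 n - t0 n - t2 n) * (n : ℝ) ^ 2) (1 / M) := by
    refine ((((((hBc.mul hu hBc).add (hAc.mul hu hAc)).mul hu hQ).add
      ((Cg.zero hρ).add (Cg.zero hσ))).mul hu (hP.inv hu hm'.ne')).mul hu
      (hnN.mul hu hnN)).congr ?_ (by field_simp; ring)
    filter_upwards [hρe, hσe, hNpos, (hP.tendsto hu).eventually_ne hm'.ne'] with n h1 h2 hp hne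
    generalize (Real.exp (M * t1 n) * (1 + M * t1 n) + C) / N n = P at *
    generalize Real.exp (M * t1 n) * (M + M ^ 2 * t1 n / 2) / N n = Q at *
    generalize N n = K at *
    field_simp at h1 h2 ⊢
    linear_combination (n : ℝ) ^ 2 * (h1 + h2)
  have hfin := (Asymptotics.IsBigO.trans hmain hulog).mul
    (Asymptotics.isBigO_refl (fun n : ℕ => ((n : ℝ) ^ 2)⁻¹) atTop)
  refine hfin.congr' ?_ ?_
  · filter_upwards [ge2] with n hn
    have : (n : ℝ) ≠ 0 := by positivity
    field_simp
  · filter_upwards with n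
    rw [one_div, mul_inv, mul_comm]
end

section
/- Let f(x) = x·(e^{m·x} + c), and for each i ∈ {0,1,2} let t_i = t_i(n) be the unique positive real number with f(t_i) = n + i. Then as n → ∞, 1/t_0 + 1/t_2 − 2/t_1 = O(1/(n²·log² n)). -/
open Filter

/-- tangent bounds for the exponential -/
lemma exp_tan (m x y : ℝ) : m * (y - x) * Real.exp (m * x) ≤ Real.exp (m * y) - Real.exp (m * x) ∧
    Real.exp (m * y) - Real.exp (m * x) ≤ m * (y - x) * Real.exp (m * y) := by
  have h1 := Real.add_one_le_exp (m * y - m * x)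
  have h2 := Real.add_one_le_exp (m * x - m * y)
  have e1 : Real.exp (m * y) = Real.exp (m * x) * Real.exp (m * y - m * x) := by
    rw [← Real.exp_add]; congr 1; ring
  have e2 : Real.exp (m * x) = Real.exp (m * y) * Real.exp (m * x - m * y) := by
    rw [← Real.exp_add]; congr 1; ring
  have p1 := Real.exp_pos (m * x)
  have p2 := Real.exp_pos (m * y)
  constructor
  · have := mul_le_mul_of_nonneg_left h1 p1.le
    rw [← e1] at this
    linarith
  · have := mul_le_mul_of_nonneg_left h2 p2.le
    rw [← e2] at this
    linarith

lemma f_tan (m c x y : ℝ) (hm : 0 ≤ m) (hx : 0 < x) (hxy : x ≤ y) :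
    (y - x) * (Real.exp (m * x) + c + m * (x * Real.exp (m * x))) ≤
      y * (Real.exp (m * y) + c) - x * (Real.exp (m * x) + c) ∧
    y * (Real.exp (m * y) + c) - x * (Real.exp (m * x) + c) ≤
    (y - x) * (Real.exp (m * y) + c + m * (y * Real.exp (m * y))) := by
  obtain ⟨h1, h2⟩ := exp_tan m x y
  have p1 := Real.exp_pos (m * x)
  have p2 := Real.exp_pos (m * y)
  have hd : 0 ≤ y - x := by linarith
  have hE : 0 ≤ Real.exp (m * y) - Real.exp (m * x) := le_trans (by positivity) h1
  constructor
  · have a1 := mul_le_mul_of_nonneg_left h1 hx.le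
    have a2 := mul_nonneg hd hE
    linarith
  · have a1 := mul_le_mul_of_nonneg_left h2 (by linarith : 0 ≤ y)
    have a2 := mul_nonneg hd hE
    linarith

lemma f_lt (m c x y : ℝ) (hm : 0 ≤ m) (hc : 0 ≤ c) (hy : 0 < y)
    (h : x * (Real.exp (m * x) + c) < y * (Real.exp (m * y) + c)) : x < y := by
  by_contra hcon
  push Not at hcon
  have h1 := (f_tan m c y x hm hy hcon).1
  have : 0 ≤ (x - y) * (Real.exp (m * y) + c + m * (y * Real.exp (m * y))) := by
    have : 0 ≤ x - y := by linarith
    positivity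
  linarith

lemma xexp_ge (m c x N : ℝ) (hm : 0 ≤ m) (hc : 0 ≤ c) (hx : 0 < x)
    (h : x * (Real.exp (m * x) + c) = N) : N ≤ (1 + c) * (x * Real.exp (m * x)) := by
  have : 1 ≤ Real.exp (m * x) := Real.one_le_exp (by positivity)
  have := mul_le_mul_of_nonneg_left this (by positivity : 0 ≤ c * x)
  linarith

/-- consecutive step bound -/
lemma step_le (m c x y N M : ℝ) (hm : 1 ≤ m) (hc : 0 ≤ c) (hx : 0 < x) (hN : 0 < N) (hNM : N ≤ M)
    (hxy : x < y)
    (h : x * (Real.exp (m * x) + c) = M) (h' : y * (Real.exp (m * y) + c) = M + 1) :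
    y - x ≤ (1 + c) / N := by
  have h1 := (f_tan m c x y (by linarith) hx hxy.le).1
  have h2 := xexp_ge m c x M (by linarith) hc hx h
  rw [h, h'] at h1
  have p1 := Real.exp_pos (m * x)
  have hd : 0 < y - x := by linarith
  have q : 0 < x * Real.exp (m * x) := by positivity
  have h3 : (y - x) * (x * Real.exp (m * x)) ≤ 1 := by
    have a1 : 0 ≤ (y - x) * (Real.exp (m * x) + c) := by positivity
    have a2 : 0 ≤ (m - 1) * ((y - x) * (x * Real.exp (m * x))) :=
      mul_nonneg (by linarith) (by positivity)
    linarith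
  rw [le_div_iff₀ hN]
  have a3 := mul_le_mul_of_nonneg_left (hNM.trans h2) hd.le
  have a4 := mul_le_mul_of_nonneg_left h3 (by linarith : 0 ≤ 1 + c)
  linarith

set_option maxHeartbeats 1000000 in
lemma core (m c a b d N : ℝ) (hm : 1 ≤ m) (hc : 0 ≤ c) (ha : 1 ≤ a) (hb : 0 < b) (hd : 0 < d)
    (hN : 2 ≤ N)
    (h0 : a * (Real.exp (m * a) + c) = N)
    (h1 : b * (Real.exp (m * b) + c) = N + 1)
    (h2 : d * (Real.exp (m * d) + c) = N + 2) :
    |1 / a + 1 / d - 2 / b| ≤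
      (4 * (1 + c) ^ 3 * (m ^ 2 + 2 * m) + 2 * (1 + c) ^ 2) / N ^ 2 / a ^ 2 := by
  have hm0 : 0 ≤ m := by linarith
  have hN0 : 0 < N := by linarith
  have ha0 : 0 < a := by linarith
  have hab : a < b := f_lt m c a b hm0 hc hb (by linarith)
  have hbd : b < d := f_lt m c b d hm0 hc hd (by linarith)
  have hh := step_le m c a b N N hm hc ha0 hN0 le_rfl hab h0 h1
  have hk := step_le m c b d N (N + 1) hm hc hb hN0 (by linarith) hbd h1 (by linarith)
  have t1 := f_tan m c a b hm0 ha0 hab.le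
  have t2 := f_tan m c b d hm0 hb hbd.le
  have hge := xexp_ge m c a N hm0 hc ha0 h0
  have e := (exp_tan m a d).2
  have pA := Real.exp_pos (m * a)
  have pB := Real.exp_pos (m * b)
  have pD := Real.exp_pos (m * d)
  have hADle : Real.exp (m * a) ≤ Real.exp (m * d) :=
    Real.exp_le_exp.2 (mul_le_mul_of_nonneg_left (by linarith) hm0)
  rw [h0, h1] at t1
  rw [h1, h2] at t2
  obtain ⟨t1l, t1r⟩ := t1
  obtain ⟨t2l, t2r⟩ := t2
  generalize Real.exp (m * a) = A at *
  generalize Real.exp (m * b) = B at *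
  generalize Real.exp (m * d) = D at *
  -- k ≤ h
  have hkh : d - b ≤ b - a := by
    have : 0 < B + c + m * (b * B) := by positivity
    exact le_of_mul_le_mul_right (by linarith) this
  have hda : 0 < d - a := by linarith
  have hdD : d * D ≤ 2 * N := by
    have : 0 ≤ d * c := by positivity
    linarith
  -- Q - P bound
  have hDA : D - A ≤ m * ((d - a) * (d * D)) := by
    have : 0 ≤ m * (d - a) * D * (d - 1) := mul_nonneg (by positivity) (by linarith)
    linarith
  have hdDaA : d * D - a * A ≤ (1 + m) * ((d - a) * (d * D)) := by
    have s1 : 0 ≤ (d - a) * D * (d - 1) := mul_nonneg (by positivity) (by linarith)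
    have s2 := mul_le_mul_of_nonneg_left e ha0.le
    have s3 : 0 ≤ m * (d - a) * D * (d - a) := by positivity
    linarith
  have hX : (d - a) * (d * D) ≤ 4 * (1 + c) := by
    have s : d - a ≤ 2 * ((1 + c) / N) := by linarith
    calc (d - a) * (d * D) ≤ (2 * ((1 + c) / N)) * (2 * N) :=
          mul_le_mul s hdD (by positivity) (by positivity)
      _ = 4 * (1 + c) := by field_simp; ring
  have hQP : (D + c + m * (d * D)) - (A + c + m * (a * A)) ≤ 4 * (1 + c) * (m ^ 2 + 2 * m) := by
    have s1 := mul_le_mul_of_nonneg_left hdDaA hm0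
    have s2 := mul_le_mul_of_nonneg_left hX (by positivity : 0 ≤ m ^ 2 + 2 * m)
    linarith
  have hkpos : 0 < d - b := by linarith
  have hmain : (A + c + m * (a * A)) * ((b - a) - (d - b)) ≤
      4 * (1 + c) * (m ^ 2 + 2 * m) * ((1 + c) / N) := by
    have s1 := mul_le_mul_of_nonneg_right hQP hkpos.le
    have s2 := mul_le_mul_of_nonneg_left hk
      (by positivity : 0 ≤ 4 * (1 + c) * (m ^ 2 + 2 * m))
    linarith
  have hP : N / (1 + c) ≤ A + c + m * (a * A) := by
    rw [div_le_iff₀ (by positivity)]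
    have s1 : 0 ≤ (A + c + (m - 1) * (a * A)) * (1 + c) :=
      mul_nonneg (add_nonneg (by positivity) (mul_nonneg (by linarith) (by positivity)))
        (by positivity)
    linarith
  have hhk : (b - a) - (d - b) ≤ 4 * (1 + c) ^ 3 * (m ^ 2 + 2 * m) / N ^ 2 := by
    have s0 : 0 ≤ (b - a) - (d - b) := by linarith
    have s1 := (mul_le_mul_of_nonneg_right hP s0).trans hmain
    have s2 := mul_le_mul_of_nonneg_left s1 (by positivity : 0 ≤ (1 + c) / N)
    calc (b - a) - (d - b) = (1 + c) / N * (N / (1 + c) * ((b - a) - (d - b))) := by field_simp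
      _ ≤ _ := s2
      _ = _ := by field_simp
  have hkk : (d - b) * (d - a) ≤ 2 * (1 + c) ^ 2 / N ^ 2 := by
    calc (d - b) * (d - a) ≤ ((1 + c) / N) * (2 * ((1 + c) / N)) :=
          mul_le_mul hk (by linarith) hda.le (by positivity)
      _ = _ := by field_simp
  have key : 1 / a + 1 / d - 2 / b =
      ((b - a) - (d - b)) / (a * b) + (d - b) * (d - a) / (a * b * d) := by
    field_simp; ring
  have s0 : 0 ≤ (b - a) - (d - b) := by linarith
  rw [key, abs_of_nonneg (by positivity), add_div, add_div]
  have hab2 : a ^ 2 ≤ a * b := by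
    rw [sq]; exact mul_le_mul_of_nonneg_left hab.le ha0.le
  have habd : a ^ 2 ≤ a * b * d :=
    hab2.trans (le_mul_of_one_le_right (by positivity) (by linarith))
  exact add_le_add (div_le_div₀ (by positivity) hhk (by positivity) hab2)
    (div_le_div₀ (by positivity) hkk (by positivity) habd)

/-- If `t i` is the unique positive solution of `t·(e^{m·t} + c) = n + i`, then
`1/t_0 + 1/t_2 − 2/t_1 = O(1/(n²·log² n))` as `n → ∞`. -/
theorem stmt_14 (m c : ℕ) (hm : 0 < m) (t0 t1 t2 : ℕ → ℝ)
    (ht0 : ∀ n : ℕ, 2 ≤ n → 0 < t0 n ∧ t0 n * (Real.exp (m * t0 n) + c) = n)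
    (ht1 : ∀ n : ℕ, 2 ≤ n → 0 < t1 n ∧ t1 n * (Real.exp (m * t1 n) + c) = n + 1)
    (ht2 : ∀ n : ℕ, 2 ≤ n → 0 < t2 n ∧ t2 n * (Real.exp (m * t2 n) + c) = n + 2) :
    (fun n : ℕ => 1 / t0 n + 1 / t2 n - 2 / t1 n)
      =O[atTop] (fun n : ℕ => 1 / ((n : ℝ) ^ 2 * (Real.log n) ^ 2)) := by
  have hlog : Tendsto (fun n : ℕ => Real.log (n : ℝ)) atTop atTop :=
    Real.tendsto_log_atTop.comp tendsto_natCast_atTop_atTop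
  refine Asymptotics.IsBigO.of_bound
    ((4 * (1 + (c : ℝ)) ^ 3 * ((m : ℝ) ^ 2 + 2 * m) + 2 * (1 + (c : ℝ)) ^ 2) *
      (2 * (m + 1)) ^ 2) ?_
  filter_upwards [eventually_ge_atTop 2, hlog.eventually_ge_atTop (2 * Real.log (1 + c)),
    hlog.eventually_ge_atTop (2 * ((m : ℝ) + 1))] with n hn hl1 hl2
  obtain ⟨a0, ha⟩ := ht0 n hn
  obtain ⟨b0, hb⟩ := ht1 n hn
  obtain ⟨d0, hd⟩ := ht2 n hn
  have hm1 : (1 : ℝ) ≤ m := by exact_mod_cast hm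
  have hc : (0 : ℝ) ≤ c := Nat.cast_nonneg c
  have hn' : (2 : ℝ) ≤ n := by exact_mod_cast hn
  have hge := xexp_ge m c (t0 n) n (by linarith) hc a0 ha
  have hx : t0 n ≤ Real.exp (t0 n) := by linarith [Real.add_one_le_exp (t0 n)]
  have hle : (n : ℝ) ≤ (1 + c) * Real.exp ((m + 1) * t0 n) := by
    refine hge.trans (mul_le_mul_of_nonneg_left ?_ (by positivity))
    have : Real.exp ((m + 1) * t0 n) = Real.exp (t0 n) * Real.exp (m * t0 n) := by
      rw [← Real.exp_add]; congr 1; ring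
    rw [this]
    exact mul_le_mul_of_nonneg_right hx (Real.exp_pos _).le
  have hlg := Real.log_le_log (by linarith) hle
  rw [Real.log_mul (by positivity) (Real.exp_pos _).ne', Real.log_exp] at hlg
  have hL : Real.log n ≤ 2 * (m + 1) * t0 n := by linarith
  have hLpos : 0 < Real.log n := by linarith
  have ha1 : 1 ≤ t0 n := by
    have : 0 < 2 * ((m : ℝ) + 1) := by positivity
    exact le_of_mul_le_mul_left (by linarith) this
  have hcore := core m c _ _ _ n hm1 hc ha1 b0 d0 hn' ha hb hd
  have hnpos : (0 : ℝ) < n := by linarith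
  rw [Real.norm_eq_abs, Real.norm_eq_abs, abs_of_nonneg (by positivity : 0 ≤ 1 / ((n : ℝ) ^ 2 * (Real.log n) ^ 2))]
  refine hcore.trans ?_
  generalize 4 * (1 + (c : ℝ)) ^ 3 * ((m : ℝ) ^ 2 + 2 * m) + 2 * (1 + (c : ℝ)) ^ 2 = K at *
  have hK : 0 ≤ K := by
    have := (abs_nonneg _).trans hcore
    by_contra hneg
    push Not at hneg
    have : K / (n : ℝ) ^ 2 / t0 n ^ 2 < 0 :=
      div_neg_of_neg_of_pos (div_neg_of_neg_of_pos hneg (by positivity)) (by positivity)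
    linarith
  have hsq : (Real.log n) ^ 2 ≤ (2 * (m + 1)) ^ 2 * t0 n ^ 2 := by
    rw [← mul_pow]; exact pow_le_pow_left₀ hLpos.le hL 2
  rw [div_div, mul_one_div, div_le_div_iff₀ (by positivity) (by positivity)]
  have := mul_le_mul_of_nonneg_left hsq (by positivity : 0 ≤ K * (n : ℝ) ^ 2)
  linarith
end

section
/- Let h be a continuous real-valued function on the closed interval [a,b] (with a < b) such that the second derivative h'' exists on the open interval (a,b). Then for any c ∈ (a,b), there exists s ∈ (a,b) such that h(a)/((a−b)(a−c)) + h(b)/((b−a)(b−c)) + h(c)/((c−a)(c−b)) = h''(s)/2. -/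
/-- If `h` is continuous on `[a,b]`, has derivative `h'` and second derivative
`h''` on `(a,b)`, then for any `c ∈ (a,b)` there is `s ∈ (a,b)` with
`h(a)/((a−b)(a−c)) + h(b)/((b−a)(b−c)) + h(c)/((c−a)(c−b)) = h''(s)/2`. -/
theorem stmt_15 (a b c : ℝ) (hac : a < c) (hcb : c < b)
    (h h' h'' : ℝ → ℝ)
    (hcont : ContinuousOn h (Set.Icc a b))
    (hderiv : ∀ x ∈ Set.Ioo a b, HasDerivAt h (h' x) x)
    (hderiv2 : ∀ x ∈ Set.Ioo a b, HasDerivAt h' (h'' x) x) :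
    ∃ s ∈ Set.Ioo a b,
      h a / ((a - b) * (a - c)) + h b / ((b - a) * (b - c)) +
        h c / ((c - a) * (c - b)) = h'' s / 2 := by
  have h1 : c - a ≠ 0 := sub_ne_zero.mpr hac.ne'
  have h2 : b - c ≠ 0 := sub_ne_zero.mpr hcb.ne'
  have h3 : b - a ≠ 0 := sub_ne_zero.mpr (hac.trans hcb).ne'
  obtain ⟨K, hK⟩ : ∃ K, K = h a / ((a - b) * (a - c)) + h b / ((b - a) * (b - c)) +
        h c / ((c - a) * (c - b)) := ⟨_, rfl⟩
  obtain ⟨m, hm⟩ : ∃ m, m = (h c - h a) / (c - a) := ⟨_, rfl⟩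
  rw [← hK]
  have hmc : m * (c - a) = h c - h a := by rw [hm]; field_simp
  have hKb : K * ((b - a) * (b - c)) = h b - h a - m * (b - a) := by
    have e1 : a - b = -(b - a) := by ring
    have e2 : a - c = -(c - a) := by ring
    have e3 : c - b = -(b - c) := by ring
    rw [hK, hm, e1, e2, e3]
    field_simp
    ring
  let g : ℝ → ℝ := fun x => h x - K * ((x - a) * (x - c)) - m * (x - a)
  let g' : ℝ → ℝ := fun x => h' x - K * (2 * x - a - c) - m
  have hg : ContinuousOn g (Set.Icc a b) := by
    refine (hcont.sub ?_).sub ?_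
    · exact Continuous.continuousOn (by fun_prop)
    · exact Continuous.continuousOn (by fun_prop)
  have hgd : ∀ x ∈ Set.Ioo a b, HasDerivAt g (g' x) x := by
    intro x hx
    have da := (hasDerivAt_id x).sub_const a
    have dc := (hasDerivAt_id x).sub_const c
    have := ((hderiv x hx).sub ((da.mul dc).const_mul K)).sub (da.const_mul m)
    refine this.congr_deriv ?_
    simp only [g', id]
    ring
  have hgd2 : ∀ x ∈ Set.Ioo a b, HasDerivAt g' (h'' x - K * 2) x := by
    intro x hx
    have d := ((((hasDerivAt_id x).const_mul 2).sub_const a).sub_const c).const_mul K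
    refine (((hderiv2 x hx).sub d).sub_const m).congr_deriv ?_
    ring
  have gac : g a = g c := by simp only [g]; linarith
  have gcb : g c = g b := by simp only [g]; linarith
  obtain ⟨x, hx, hx0⟩ := exists_hasDerivAt_eq_zero hac
    (hg.mono (Set.Icc_subset_Icc_right hcb.le)) gac
    (fun x hx => hgd x ⟨hx.1, hx.2.trans hcb⟩)
  obtain ⟨y, hy, hy0⟩ := exists_hasDerivAt_eq_zero hcb
    (hg.mono (Set.Icc_subset_Icc_left hac.le)) gcb
    (fun x hx => hgd x ⟨hac.trans hx.1, hx.2⟩)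
  obtain ⟨s, hs, hs0⟩ := exists_hasDerivAt_eq_zero (hx.2.trans hy.1)
    (fun z hz => (hgd2 z ⟨hx.1.trans_le hz.1, hz.2.trans_lt hy.2⟩).continuousAt.continuousWithinAt)
    (hx0.trans hy0.symm)
    (fun z hz => hgd2 z ⟨hx.1.trans hz.1, hz.2.trans hy.2⟩)
  exact ⟨s, ⟨hx.1.trans hs.1, hs.2.trans hy.2⟩, by linarith⟩
end
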